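/- arXiv:2012.13795 — 3 statements merged into one kernel-verified Lean document; each statement's English description precedes it below -/
import Mathlib

section
/- For any nonempty permutations α and β, the permutation α ⊕ 1 ⊕ β is an annihilator: every permutation π containing an interval copy of α ⊕ 1 ⊕ β satisfies μ(1,π) = 0. -/
/-!
The permutation pattern poset and its Möbius function.

A permutation of length `n` is represented as an element of the symmetric
group on `Fin n`; the collection of all permutations of all lengths is the
sigma type `PPerm`.  Pattern containment `PPerm.Le` makes `PPerm` into the
permutation pattern poset, and `mu` is its Möbius function, defined by the
usual recursion `μ(σ,σ) = 1`, `μ(σ,π) = -∑_{σ ≤ λ < π} μ(σ,λ)` for `σ < π`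
and `μ(σ,π) = 0` otherwise.
-/

open scoped Classical

/-- A permutation of an arbitrary finite length `n`, as an element of the
symmetric group on `Fin n`. -/
abbrev PPerm : Type := Σ n : ℕ, Equiv.Perm (Fin n)

namespace PPerm

/-- Classical pattern containment `σ ≤ π`: there is a strictly increasing map
of positions along which `π` realises the same relative order as `σ`. -/
def Le (σ π : PPerm) : Prop :=
  ∃ f : Fin σ.1 → Fin π.1, StrictMono f ∧
    ∀ a b : Fin σ.1, σ.2 a < σ.2 b ↔ π.2 (f a) < π.2 (f b)

/-- Strict pattern containment. -/
def Lt (σ π : PPerm) : Prop := Le σ π ∧ σ ≠ π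

/-- The permutation `1` of length one. -/
def one : PPerm := ⟨1, 1⟩

/-- The direct sum `α ⊕ β` of two permutations: `β` is placed after and
above `α`. -/
def dsum (α β : PPerm) : PPerm :=
  ⟨α.1 + β.1, finSumFinEquiv.symm.trans ((Equiv.sumCongr α.2 β.2).trans finSumFinEquiv)⟩

end PPerm

/-- Fuelled recursion computing the Möbius function of the permutation
pattern poset.  Any `λ` with `σ ≤ λ < π` has length `< |π|`, so for any
fuel `≥ |π| + 1` this computes the standard recursion
`μ(σ,σ) = 1`, `μ(σ,π) = -∑_{σ ≤ λ < π} μ(σ,λ)` for `σ < π`, and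
`μ(σ,π) = 0` when `σ ≰ π`. -/
noncomputable def muAux : ℕ → PPerm → PPerm → ℤ
  | 0, _, _ => 0
  | n + 1, σ, π =>
    if σ = π then 1
    else if PPerm.Le σ π then
      - ∑ m ∈ Finset.range π.1,
          ∑ p ∈ Finset.univ.filter
              (fun p : Equiv.Perm (Fin m) => PPerm.Le σ ⟨m, p⟩ ∧ PPerm.Le ⟨m, p⟩ π),
            muAux n σ ⟨m, p⟩
    else 0

/-- The Möbius function of the permutation pattern poset. -/
noncomputable def mu (σ π : PPerm) : ℤ := muAux (π.1 + 1) σ π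

/-- The closed interval `[σ, π]` of the permutation pattern poset, as a
finset (any `λ ≤ π` has length `≤ |π|`). -/
noncomputable def intervalCC (σ π : PPerm) : Finset PPerm :=
  (Finset.range (π.1 + 1)).biUnion fun m =>
    (Finset.univ.filter fun p : Equiv.Perm (Fin m) =>
        PPerm.Le σ ⟨m, p⟩ ∧ PPerm.Le ⟨m, p⟩ π).image fun p => (⟨m, p⟩ : PPerm)

/-- The half-open interval `[σ, π)` of the permutation pattern poset. -/
noncomputable def intervalCO (σ π : PPerm) : Finset PPerm :=
  (intervalCC σ π).filter fun lam => lam ≠ π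

/-- `π` contains an interval copy of `α`: there is a set of `|α|` contiguous
positions of `π` (starting at position `i`), whose values form a contiguous
range (starting at value `v`), and whose entries are order-isomorphic
to `α`. -/
def HasIntervalCopy (π α : PPerm) : Prop :=
  ∃ (f : Fin α.1 → Fin π.1) (i v : ℕ),
    (∀ a : Fin α.1, (f a : ℕ) = i + (a : ℕ)) ∧
    (∀ a : Fin α.1, v ≤ (π.2 (f a) : ℕ) ∧ (π.2 (f a) : ℕ) < v + α.1) ∧
    (∀ a b : Fin α.1, α.2 a < α.2 b ↔ π.2 (f a) < π.2 (f b))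

/-- Invariant form of "contains an interval copy of `a ⊕ 1 ⊕ b`". -/
def HasSOS (π : PPerm) : Prop :=
  ∃ (S : Set (Fin π.1)) (m a b : Fin π.1), m ∈ S ∧ a ∈ S ∧ b ∈ S ∧ a < m ∧ m < b ∧
    (∀ s ∈ S, s < m ↔ π.2 s < π.2 m) ∧
    (∀ x, x ∉ S → ∀ s ∈ S, ∀ t ∈ S, (x < s ↔ x < t) ∧ (π.2 x < π.2 s ↔ π.2 x < π.2 t))

theorem PPerm.le_refl' (σ : PPerm) : PPerm.Le σ σ := ⟨id, strictMono_id, fun _ _ => Iff.rfl⟩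

theorem PPerm.le_trans' {σ τ π : PPerm} (h : PPerm.Le σ τ) (h' : PPerm.Le τ π) : PPerm.Le σ π := by
  obtain ⟨f, hf, hf'⟩ := h
  obtain ⟨g, hg, hg'⟩ := h'
  exact ⟨g ∘ f, hg.comp hf, fun a b => (hf' a b).trans (hg' _ _)⟩

theorem one_le' (σ : PPerm) (h : 0 < σ.1) : PPerm.Le PPerm.one σ := by
  refine ⟨fun _ => ⟨0, h⟩, ?_, ?_⟩
  · intro a b hab
    have ha : (a : ℕ) < 1 := a.2
    have hb : (b : ℕ) < 1 := b.2
    have : (a : ℕ) < b := hab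
    omega
  · intro a b
    have : a = b := by
      have ha : (a : ℕ) < 1 := a.2
      have hb : (b : ℕ) < 1 := b.2
      apply Fin.ext; omega
    subst this
    simp

theorem le_same {n : ℕ} {p q : Equiv.Perm (Fin n)} (h : PPerm.Le ⟨n, p⟩ ⟨n, q⟩) : p = q := by
  obtain ⟨f, hf, hf'⟩ := h
  dsimp only at f hf hf'
  have hid : f = id := by
    have hb : Function.Bijective f := Finite.injective_iff_bijective.mp hf.injective
    have := Subsingleton.elim (StrictMono.orderIsoOfSurjective f hf hb.2) (OrderIso.refl _)
    funext x
    exact congrArg (fun e : Fin n ≃o Fin n => e x) this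
  subst hid
  have hm : StrictMono (fun x => q (p.symm x)) := by
    intro x y hxy
    have := (hf' (p.symm x) (p.symm y)).1 (by simpa using hxy)
    simpa using this
  have hb : Function.Bijective (fun x => q (p.symm x)) :=
    Finite.injective_iff_bijective.mp hm.injective
  have := Subsingleton.elim (StrictMono.orderIsoOfSurjective _ hm hb.2) (OrderIso.refl _)
  ext x
  have h2 := congrArg (fun e : Fin n ≃o Fin n => e (p x)) this
  simp at h2
  rw [h2]

theorem muAux_eq_mu (σ : PPerm) : ∀ (N : ℕ) (π : PPerm) (f : ℕ), π.1 < N → π.1 + 1 ≤ f →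
    muAux f σ π = mu σ π := by
  intro N
  induction N with
  | zero => intro π f h; omega
  | succ N ih =>
    intro π f hN hf
    obtain ⟨g, rfl⟩ : ∃ g, f = g + 1 := ⟨f - 1, by omega⟩
    unfold mu
    simp only [muAux]
    congr 2
    congr 1
    refine Finset.sum_congr rfl fun m hm => Finset.sum_congr rfl fun p _ => ?_
    have hm := Finset.mem_range.1 hm
    rw [ih ⟨m, p⟩ g (by simp only; omega) (by simp only; omega),
      ih ⟨m, p⟩ π.1 (by simp only; omega) (by simp only; omega)]

/-- Sum of `μ(1,λ)` over `λ ≤ π` of length `m`. -/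
noncomputable def layer (π : PPerm) (m : ℕ) : ℤ :=
  ∑ p ∈ Finset.univ.filter
      (fun p : Equiv.Perm (Fin m) => PPerm.Le PPerm.one ⟨m, p⟩ ∧ PPerm.Le ⟨m, p⟩ π),
    mu PPerm.one ⟨m, p⟩

theorem mu_eq (π : PPerm) (h : 2 ≤ π.1) :
    mu PPerm.one π = - ∑ m ∈ Finset.range π.1, layer π m := by
  have h1 : PPerm.one ≠ π := by
    rintro rfl
    simp [PPerm.one] at h
  conv_lhs => unfold mu
  simp only [muAux]
  rw [if_neg h1, if_pos (one_le' π (by omega))]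
  congr 1
  refine Finset.sum_congr rfl fun m hm => Finset.sum_congr rfl fun p _ => ?_
  have hm := Finset.mem_range.1 hm
  exact muAux_eq_mu _ (m + 1) _ _ (by simp) (by simp only; omega)

theorem layer_self (π : PPerm) (h : 0 < π.1) : layer π π.1 = mu PPerm.one π := by
  unfold layer
  have : (Finset.univ.filter
      (fun p : Equiv.Perm (Fin π.1) => PPerm.Le PPerm.one ⟨π.1, p⟩ ∧ PPerm.Le ⟨π.1, p⟩ π))
      = {π.2} := by
    ext p
    simp only [Finset.mem_filter, Finset.mem_univ, true_and, Finset.mem_singleton]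
    constructor
    · rintro ⟨_, h2⟩
      exact le_same h2
    · rintro rfl
      exact ⟨one_le' _ h, PPerm.le_refl' _⟩
  rw [this, Finset.sum_singleton]

theorem sum_layer (π : PPerm) (h : 2 ≤ π.1) :
    ∑ m ∈ Finset.range (π.1 + 1), layer π m = 0 := by
  rw [Finset.sum_range_succ, layer_self π (by omega), mu_eq π h]
  ring

/-- Removing a point. -/
theorem exists_remove {k : ℕ} (π : Equiv.Perm (Fin (k + 1))) (m : Fin (k + 1)) :
    ∃ ρ : Equiv.Perm (Fin k), PPerm.Le ⟨k, ρ⟩ ⟨k + 1, π⟩ ∧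
      ∀ (l : PPerm) (f : Fin l.1 → Fin (k + 1)), StrictMono f →
        (∀ a b, l.2 a < l.2 b ↔ π (f a) < π (f b)) → (∀ a, f a ≠ m) → PPerm.Le l ⟨k, ρ⟩ := by
  let e : {x // x ≠ m} ≃ {x // x ≠ π m} := π.subtypeEquiv (by intro a; simp)
  let ρ : Equiv.Perm (Fin k) := (finSuccAboveOrderIso m).toEquiv.trans
    (e.trans (finSuccAboveOrderIso (π m)).symm.toEquiv)
  have key : ∀ a b : Fin k, ρ a < ρ b ↔ π (m.succAbove a) < π (m.succAbove b) := by
    intro a b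
    change (finSuccAboveOrderIso (π m)).symm (e (finSuccAboveOrderIso m a)) <
      (finSuccAboveOrderIso (π m)).symm (e (finSuccAboveOrderIso m b)) ↔ _
    rw [OrderIso.lt_iff_lt]
    rfl
  refine ⟨ρ, ⟨m.succAbove, Fin.strictMono_succAbove m, key⟩, ?_⟩
  intro l f hf hf' hm
  have : ∀ a, ∃ b, m.succAbove b = f a := fun a => Fin.exists_succAbove_eq (hm a)
  choose g hg using this
  refine ⟨g, ?_, ?_⟩
  · intro a b hab
    have := hf hab
    rw [← hg, ← hg] at this
    exact (Fin.strictMono_succAbove m).lt_iff_lt.1 this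
  · intro a b
    change _ ↔ ρ (g a) < ρ (g b)
    rw [key, hg, hg, hf']

/-- Moving the point at `m` to `c` within the interval `S`. -/
theorem move_point {k : ℕ} (π : Equiv.Perm (Fin k)) (S : Set (Fin k)) (m c : Fin k)
    (hm : m ∈ S) (hc : c ∈ S)
    (hI : ∀ x, x ∉ S → ∀ s ∈ S, ∀ t ∈ S, (x < s ↔ x < t) ∧ (π x < π s ↔ π x < π t))
    (l : PPerm) (f : Fin l.1 → Fin k) (hf : StrictMono f)
    (hf' : ∀ a b, l.2 a < l.2 b ↔ π (f a) < π (f b))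
    (hcS : ∀ a, f a ∈ S → f a ≠ m → (f a < m ↔ f a < c) ∧ (π (f a) < π m ↔ π (f a) < π c) ∧
      f a ≠ c) :
    StrictMono (fun a => if f a = m then c else f a) ∧
    ∀ a b, l.2 a < l.2 b ↔
      π (if f a = m then c else f a) < π (if f b = m then c else f b) := by
  have H : ∀ a, f a ≠ m → (f a < m ↔ f a < c) ∧ (π (f a) < π m ↔ π (f a) < π c) ∧ f a ≠ c := by
    intro a ha
    by_cases h : f a ∈ S
    · exact hcS a h ha
    · have := hI _ h m hm c hc
      exact ⟨this.1, this.2, fun h' => h (h' ▸ hc)⟩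
  have H2 : ∀ a, f a ≠ m → (m < f a ↔ c < f a) ∧ (π m < π (f a) ↔ π c < π (f a)) := by
    intro a ha
    obtain ⟨h1, h2, h3⟩ := H a ha
    have h4 : π (f a) ≠ π m := fun h => ha (π.injective h)
    have h5 : π (f a) ≠ π c := fun h => h3 (π.injective h)
    constructor
    · rw [← not_iff_not, not_lt, not_lt, ha.le_iff_lt, h3.le_iff_lt, h1]
    · rw [← not_iff_not, not_lt, not_lt, h4.le_iff_lt, h5.le_iff_lt, h2]
  constructor
  · intro a b hab
    have := hf hab
    by_cases ha : f a = m <;> by_cases hb : f b = m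
    · rw [ha, hb] at this; exact absurd this (lt_irrefl _)
    · simp only [ha, hb, if_true, if_false]
      rw [ha] at this
      exact (H2 b hb).1.1 this
    · simp only [ha, hb, if_true, if_false]
      rw [hb] at this
      exact (H a ha).1.1 this
    · simp only [ha, hb, if_false]; exact this
  · intro a b
    rw [hf']
    by_cases ha : f a = m <;> by_cases hb : f b = m
    · simp [ha, hb]
    · simp only [ha, hb, if_true, if_false]
      exact (H2 b hb).2
    · simp only [ha, hb, if_true, if_false]
      exact (H a ha).2.1
    · simp only [ha, hb, if_false]

theorem mu_zero : ∀ (N : ℕ) (π : PPerm), π.1 = N → HasSOS π → mu PPerm.one π = 0 := by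
  intro N
  induction N using Nat.strong_induction_on with
  | _ N ih =>
  rintro ⟨n, π⟩ hN ⟨S, m, a, b, hm, ha, hb, ham, hmb, hS, hI⟩
  dsimp only at S m a b hN hm ha hb ham hmb hS hI
  have hn : 3 ≤ n := by
    have := b.2
    have : (a : ℕ) < m := ham
    have : (m : ℕ) < b := hmb
    omega
  obtain ⟨k, rfl⟩ : ∃ k, n = k + 1 := ⟨n - 1, by omega⟩
  obtain ⟨ρ, hρ, hρ'⟩ := exists_remove π m
  rw [mu_eq _ (by simp only; omega), neg_eq_zero]
  rw [← sum_layer ⟨k, ρ⟩ (by simp only; omega)]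
  refine Finset.sum_congr rfl fun j hj => ?_
  have hj : j < k + 1 := Finset.mem_range.1 hj
  symm
  unfold layer
  refine Finset.sum_subset ?_ ?_
  · intro p hp
    simp only [Finset.mem_filter, Finset.mem_univ, true_and] at hp ⊢
    exact ⟨hp.1, PPerm.le_trans' hp.2 hρ⟩
  intro p hp hp'
  simp only [Finset.mem_filter, Finset.mem_univ, true_and, not_and] at hp hp'
  have hnle := hp' hp.1
  obtain ⟨f, hf, hf'⟩ := hp.2
  dsimp only at f hf hf'
  have hmS : ∀ s ∈ S, s ≠ m → (m < s ∧ π m < π s ∨ s < m ∧ π s < π m) := by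
    intro s hs hsm
    have h1 := hS s hs
    have h2 : π s ≠ π m := fun h => hsm (π.injective h)
    rcases lt_or_gt_of_ne hsm with h | h
    · exact Or.inr ⟨h, h1.1 h⟩
    · refine Or.inl ⟨h, lt_of_le_of_ne (not_lt.1 fun h' => ?_) h2.symm⟩
      exact absurd (h1.2 h') (not_lt.2 h.le)
  have e1 : ∃ x, f x = m := by
    by_contra hc
    push Not at hc
    exact hnle (hρ' ⟨j, p⟩ f hf hf' hc)
  have e2 : ∃ x, f x ∈ S ∧ f x < m := by
    by_contra hc
    push Not at hc
    obtain ⟨g1, g2⟩ := move_point π S m a hm ha hI ⟨j, p⟩ f hf hf' (by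
      intro x hx hxm
      have h1 := hc x hx
      rcases hmS _ hx hxm with h | h
      · have h3 := (hS a ha).1 ham
        exact ⟨iff_of_false (not_lt.2 h1) (not_lt.2 (ham.le.trans h1)),
          iff_of_false (not_lt.2 h.2.le) (not_lt.2 (h3.le.trans h.2.le)),
          (ham.trans_le h1).ne'⟩
      · exact absurd h.1 (not_lt.2 h1))
    refine hnle (hρ' ⟨j, p⟩ _ g1 g2 ?_)
    intro x
    by_cases hx : f x = m
    · simp only [hx, if_true]; exact ham.ne
    · simp only [hx, if_false]; exact hx
  have e3 : ∃ x, f x ∈ S ∧ m < f x := by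
    by_contra hc
    push Not at hc
    obtain ⟨g1, g2⟩ := move_point π S m b hm hb hI ⟨j, p⟩ f hf hf' (by
      intro x hx hxm
      have h1 := hc x hx
      rcases hmS _ hx hxm with h | h
      · exact absurd h.1 (not_lt.2 h1)
      · have h3 : π m < π b := by
          rcases hmS b hb hmb.ne' with h | h
          · exact h.2
          · exact absurd h.1 (not_lt.2 hmb.le)
        exact ⟨iff_of_true h.1 (h.1.trans hmb), iff_of_true h.2 (h.2.trans h3),
          (h.1.trans hmb).ne⟩)
    refine hnle (hρ' ⟨j, p⟩ _ g1 g2 ?_)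
    intro x
    by_cases hx : f x = m
    · simp only [hx, if_true]; exact hmb.ne'
    · simp only [hx, if_false]; exact hx
  obtain ⟨m', rfl⟩ := e1
  obtain ⟨a', ha', ham'⟩ := e2
  obtain ⟨b', hb', hmb'⟩ := e3
  refine ih j (by omega) ⟨j, p⟩ rfl ⟨f ⁻¹' S, m', a', b', hm, ha', hb', hf.lt_iff_lt.1 ham',
    hf.lt_iff_lt.1 hmb', ?_, ?_⟩
  · intro s hs
    rw [hf', ← hS _ hs, hf.lt_iff_lt]
  · intro x hx s hs t ht
    have := hI (f x) hx (f s) hs (f t) ht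
    rw [hf', hf', ← hf.lt_iff_lt, ← hf.lt_iff_lt (a := x) (b := t)]
    exact this

theorem dsum_left (α β : PPerm) (s : Fin α.1) :
    (((PPerm.dsum α β).2 (Fin.castAdd β.1 s) : Fin (α.1 + β.1)) : ℕ) = α.2 s := by
  change ((finSumFinEquiv (Sum.map α.2 β.2 (finSumFinEquiv.symm (Fin.castAdd β.1 s))) :
    Fin (α.1 + β.1)) : ℕ) = _
  rw [finSumFinEquiv_symm_apply_castAdd]
  simp

theorem dsum_right (α β : PPerm) (s : Fin β.1) :
    (((PPerm.dsum α β).2 (Fin.natAdd α.1 s) : Fin (α.1 + β.1)) : ℕ) = α.1 + β.2 s := by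
  change ((finSumFinEquiv (Sum.map α.2 β.2 (finSumFinEquiv.symm (Fin.natAdd α.1 s))) :
    Fin (α.1 + β.1)) : ℕ) = _
  rw [finSumFinEquiv_symm_apply_natAdd]
  simp

theorem dsum_mid (α β : PPerm) :
    ∃ M : Fin (PPerm.dsum α (PPerm.dsum PPerm.one β)).1, (M : ℕ) = α.1 ∧
      ∀ s, s < M ↔ (PPerm.dsum α (PPerm.dsum PPerm.one β)).2 s <
        (PPerm.dsum α (PPerm.dsum PPerm.one β)).2 M := by
  let Z : Fin (PPerm.dsum PPerm.one β).1 := Fin.castAdd β.1 (0 : Fin 1)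
  let M : Fin (PPerm.dsum α (PPerm.dsum PPerm.one β)).1 := Fin.natAdd α.1 Z
  have hM : (M : ℕ) = α.1 := rfl
  have hZv : ((PPerm.dsum PPerm.one β).2 Z : ℕ) = 0 := dsum_left PPerm.one β (0 : Fin 1)
  have hMv : ((PPerm.dsum α (PPerm.dsum PPerm.one β)).2 M : ℕ) = α.1 := by
    have := dsum_right α (PPerm.dsum PPerm.one β) Z
    rw [hZv] at this
    exact this
  refine ⟨M, hM, ?_⟩
  intro s
  rw [Fin.lt_def, Fin.lt_def, hM, hMv]
  change Fin (α.1 + (PPerm.dsum PPerm.one β).1) at s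
  induction s using Fin.addCases with
  | left s =>
    exact iff_of_true s.2 ((dsum_left α (PPerm.dsum PPerm.one β) s).trans_lt (α.2 s).2)
  | right s =>
    have h := dsum_right α (PPerm.dsum PPerm.one β) s
    refine iff_of_false (not_lt.2 (Nat.le_add_right _ _)) (not_lt.2 ?_)
    exact (Nat.le_add_right _ _).trans h.ge

theorem hasSOS_of_copy (α β : PPerm) (hα : 0 < α.1) (hβ : 0 < β.1)
    (π : PPerm) (h : HasIntervalCopy π (PPerm.dsum α (PPerm.dsum PPerm.one β))) :
    HasSOS π := by
  obtain ⟨M, hM, hτ'⟩ := dsum_mid α β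
  have hlen : (PPerm.dsum α (PPerm.dsum PPerm.one β)).1 = α.1 + (1 + β.1) := rfl
  generalize PPerm.dsum α (PPerm.dsum PPerm.one β) = τ at *
  obtain ⟨f, i, v, hi, hv, hf⟩ := h
  have hmono : StrictMono f := by
    intro x y hxy
    have : (x : ℕ) < y := hxy
    change (f x : ℕ) < f y
    rw [hi, hi]; omega
  have hpos : ∀ x : Fin π.1, i ≤ (x : ℕ) → (x : ℕ) < i + τ.1 → x ∈ Set.range f := by
    intro x h1 h2
    refine ⟨⟨x - i, by omega⟩, Fin.ext ?_⟩
    rw [hi]; simp only; omega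
  have hval : ∀ x : Fin π.1, v ≤ (π.2 x : ℕ) → (π.2 x : ℕ) < v + τ.1 → x ∈ Set.range f := by
    have him : Finset.univ.image (fun a => (π.2 (f a) : ℕ)) = Finset.Ico v (v + τ.1) := by
      apply Finset.eq_of_subset_of_card_le
      · intro y hy
        obtain ⟨a, -, rfl⟩ := Finset.mem_image.1 hy
        exact Finset.mem_Ico.2 (hv a)
      · rw [Finset.card_image_of_injective]
        · simp
        · intro x y hxy
          exact hmono.injective (π.2.injective (Fin.ext hxy))
    intro x h1 h2
    have : (π.2 x : ℕ) ∈ Finset.Ico v (v + τ.1) := Finset.mem_Ico.2 ⟨h1, h2⟩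
    rw [← him] at this
    obtain ⟨a, -, ha⟩ := Finset.mem_image.1 this
    exact ⟨a, π.2.injective (Fin.ext ha)⟩
  refine ⟨Set.range f, f M, f ⟨0, by omega⟩, f ⟨α.1 + 1, by omega⟩, ⟨_, rfl⟩, ⟨_, rfl⟩, ⟨_, rfl⟩,
    hmono ?_, hmono ?_, ?_, ?_⟩
  · change 0 < (M : ℕ); omega
  · change (M : ℕ) < α.1 + 1; omega
  · rintro _ ⟨s, rfl⟩
    rw [hmono.lt_iff_lt, ← hf, hτ']
  · rintro x hx _ ⟨s, rfl⟩ _ ⟨t, rfl⟩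
    have p1 := hi s
    have p2 := hi t
    have q1 := hv s
    have q2 := hv t
    have := s.2
    have := t.2
    have r1 : ¬ (i ≤ (x : ℕ) ∧ (x : ℕ) < i + τ.1) := fun h => hx (hpos x h.1 h.2)
    have r2 : ¬ (v ≤ (π.2 x : ℕ) ∧ (π.2 x : ℕ) < v + τ.1) := fun h => hx (hval x h.1 h.2)
    simp only [Fin.lt_def]
    constructor <;> omega

/-- **(Corollary `cor-sum`.)**  For any nonempty permutations `α` and `β`,
the permutation `α ⊕ 1 ⊕ β` is an annihilator: every permutation `π`
containing an interval copy of `α ⊕ 1 ⊕ β` satisfies `μ(1,π) = 0`. -/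
theorem sum_one_sum_isAnnihilator (α β : PPerm) (hα : 0 < α.1) (hβ : 0 < β.1)
    (π : PPerm) (h : HasIntervalCopy π (PPerm.dsum α (PPerm.dsum PPerm.one β))) :
    mu PPerm.one π = 0 := by
  exact mu_zero _ π rfl (hasSOS_of_copy α β hα hβ π h)
end

section
/- The permutations 213 and 2431 form an annihilator pair: for every permutation τ and every pair of distinct indices i, j ≤ |τ|, the permutation τ_{i,j}[213, 2431] satisfies μ(1, τ_{i,j}[213, 2431]) = 0. -/
/-!
The permutation pattern poset and its Möbius function.

A permutation of length `n` is represented as an element of the symmetric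
group on `Fin n`; the collection of all permutations of all lengths is the
sigma type `PPerm`.  Pattern containment `PPerm.Le` makes `PPerm` into the
permutation pattern poset, and `mu` is its Möbius function, defined by the
usual recursion `μ(σ,σ) = 1`, `μ(σ,π) = -∑_{σ ≤ λ < π} μ(σ,λ)` for `σ < π`
and `μ(σ,π) = 0` otherwise.
-/

open scoped Classical

/-- `π` contains an interval copy of `α` occupying the contiguous positions
`i, i+1, …, i+|α|−1` (0-indexed): the values at these positions form a
contiguous range and the entries are order-isomorphic to `α`. -/
def HasIntervalCopyAt (π α : PPerm) (i : ℕ) : Prop :=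
  ∃ (f : Fin α.1 → Fin π.1) (v : ℕ),
    (∀ a : Fin α.1, (f a : ℕ) = i + (a : ℕ)) ∧
    (∀ a : Fin α.1, v ≤ (π.2 (f a) : ℕ) ∧ (π.2 (f a) : ℕ) < v + α.1) ∧
    (∀ a b : Fin α.1, α.2 a < α.2 b ↔ π.2 (f a) < π.2 (f b))

/-- The permutation `213` (0-indexed values `1 0 2`). -/
noncomputable def p213 : PPerm :=
  ⟨3, Equiv.ofBijective (![1, 0, 2] : Fin 3 → Fin 3) (by decide)⟩

/-- The permutation `2431` (0-indexed values `1 3 2 0`). -/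
noncomputable def p2431 : PPerm :=
  ⟨4, Equiv.ofBijective (![1, 3, 2, 0] : Fin 4 → Fin 4) (by decide)⟩

/-! ### Basic embedding machinery -/

/-- `f` is an embedding of `σ` into `π`. -/
def IsEmb (σ π : PPerm) (f : Fin σ.1 → Fin π.1) : Prop :=
  StrictMono f ∧ ∀ a b : Fin σ.1, σ.2 a < σ.2 b ↔ π.2 (f a) < π.2 (f b)

/-- `σ` embeds into the set `S` of positions of `π`. -/
def SubEmb (σ π : PPerm) (S : Finset (Fin π.1)) : Prop :=
  ∃ f, IsEmb σ π f ∧ ∀ a, f a ∈ S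

/-- `g` is an interval copy in `π` of the pattern given by the word `w`. -/
def IsBlk {k : ℕ} (π : PPerm) (w : Fin k → ℕ) (g : Fin k → Fin π.1) : Prop :=
  StrictMono g ∧ (∀ a b, w a < w b ↔ π.2 (g a) < π.2 (g b)) ∧
  ∀ x, (∀ a, g a ≠ x) → ((∀ a, x < g a) ∨ ∀ a, g a < x) ∧
    ((∀ a, π.2 x < π.2 (g a)) ∨ ∀ a, π.2 (g a) < π.2 x)

lemma mkEmb {σ π : PPerm} {f : Fin σ.1 → Fin π.1} (h1 : ∀ a b, a < b → f a < f b)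
    (h2 : ∀ a b, σ.2 a < σ.2 b → π.2 (f a) < π.2 (f b)) : IsEmb σ π f := by
  refine ⟨fun a b h => h1 a b h, fun a b => ⟨h2 a b, fun h => ?_⟩⟩
  by_contra hc
  rcases lt_or_eq_of_le (not_lt.1 hc) with h' | h'
  · exact absurd (h2 _ _ h') (not_lt.2 h.le)
  · have := σ.2.injective h'
    subst this
    exact lt_irrefl _ h

lemma le_card {σ π : PPerm} (h : PPerm.Le σ π) : σ.1 ≤ π.1 := by
  obtain ⟨f, hf, -⟩ := h
  simpa using Fintype.card_le_of_injective f hf.injective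

lemma le_eq {σ π : PPerm} (h : PPerm.Le σ π) (hc : σ.1 = π.1) : σ = π := by
  obtain ⟨n, s⟩ := σ
  obtain ⟨m, p⟩ := π
  obtain ⟨f, hf, hv⟩ := h
  simp only at hc f hf hv
  subst hc
  have hid : f = id := by
    have := Subsingleton.elim (hf.orderIsoOfSurjective f
      (Finite.surjective_of_injective hf.injective)) (OrderIso.refl _)
    funext x
    exact congrArg (fun e : Fin n ≃o Fin n => e x) this
  subst hid
  congr 1
  have hm : StrictMono (s.symm.trans p) := by
    intro a b hab
    have := (hv (s.symm a) (s.symm b)).1 (by simpa using hab)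
    simpa using this
  have := Subsingleton.elim (hm.orderIsoOfSurjective _ (s.symm.trans p).surjective)
    (OrderIso.refl _)
  ext x
  have h2 := congrArg (fun e : Fin n ≃o Fin n => e (s x)) this
  have h3 : (s.symm.trans p) (s x) = s x := h2
  simp at h3
  rw [h3]

lemma one_le_pperm {π : PPerm} (h : 1 ≤ π.1) : PPerm.Le PPerm.one π := by
  refine ⟨fun _ => ⟨0, h⟩, ?_, ?_⟩
  · intro a b hab
    exact absurd hab (by have := Subsingleton.elim (α := Fin 1) a b; subst this; exact lt_irrefl _)
  · intro a b
    have := Subsingleton.elim (α := Fin 1) a b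
    subst this
    simp

lemma exists_std (π : PPerm) (S : Finset (Fin π.1)) :
    ∃ ρ : PPerm, ρ.1 = S.card ∧ ∀ σ, PPerm.Le σ ρ ↔ SubEmb σ π S := by
  have hT : (S.image π.2).card = S.card := Finset.card_image_of_injective _ π.2.injective
  let e := S.orderIsoOfFin rfl
  let t := (S.image π.2).orderIsoOfFin hT
  let q : Fin S.card → Fin S.card := fun a =>
    t.symm ⟨π.2 (e a), Finset.mem_image_of_mem _ (e a).2⟩
  have hlt : ∀ a b, q a < q b ↔ π.2 (e a) < π.2 (e b) := by
    intro a b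
    simp only [q, OrderIso.lt_iff_lt, Subtype.mk_lt_mk]
  have hq : Function.Injective q := by
    intro a b h
    have h1 := hlt a b
    have h2 := hlt b a
    rw [h] at h1 h2
    have h3 : π.2 (e a) = π.2 (e b) :=
      le_antisymm (not_lt.1 (fun h => lt_irrefl _ (h2.2 h)))
        (not_lt.1 (fun h => lt_irrefl _ (h1.2 h)))
    exact e.injective (Subtype.ext (π.2.injective h3))
  refine ⟨⟨S.card, Equiv.ofBijective q (Finite.injective_iff_bijective.1 hq)⟩, rfl, ?_⟩
  intro σ
  constructor
  · rintro ⟨f, hf, hv⟩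
    refine ⟨fun a => (e (f a) : Fin π.1), ⟨?_, ?_⟩, fun a => (e (f a)).2⟩
    · intro a b hab
      exact e.strictMono (hf hab)
    · intro a b
      exact (hv a b).trans (hlt _ _)
  · rintro ⟨f, ⟨hf, hv⟩, hS⟩
    refine ⟨fun a => e.symm ⟨f a, hS a⟩, ?_, ?_⟩
    · intro a b hab
      exact e.symm.strictMono (by simpa using hf hab)
    · intro a b
      refine (hv a b).trans ?_
      refine Iff.trans ?_ (hlt _ _).symm
      simp

/-! ### The Möbius function -/

lemma muAux_stable : ∀ n (π : PPerm), π.1 + 1 ≤ n → muAux n PPerm.one π = mu PPerm.one π := by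
  intro n
  induction n using Nat.strong_induction_on with
  | _ n ih =>
    intro π h
    rcases Nat.eq_or_lt_of_le h with h | h
    · rw [← h]; rfl
    · obtain ⟨n, rfl⟩ : ∃ k, n = k + 1 := ⟨n - 1, by omega⟩
      unfold mu
      simp only [muAux]
      have : ∀ m ∈ Finset.range π.1, (∑ p ∈ Finset.univ.filter
              (fun p : Equiv.Perm (Fin m) => PPerm.Le PPerm.one ⟨m, p⟩ ∧ PPerm.Le ⟨m, p⟩ π),
            muAux n PPerm.one ⟨m, p⟩) = ∑ p ∈ Finset.univ.filter
              (fun p : Equiv.Perm (Fin m) => PPerm.Le PPerm.one ⟨m, p⟩ ∧ PPerm.Le ⟨m, p⟩ π),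
            muAux π.1 PPerm.one ⟨m, p⟩ := by
        intro m hm
        have hm := Finset.mem_range.1 hm
        refine Finset.sum_congr rfl fun p _ => ?_
        rw [ih n (by omega) ⟨m, p⟩ (by simp only; omega),
          ih π.1 (by omega) ⟨m, p⟩ (by simp only; omega)]
      rw [Finset.sum_congr rfl this]

/-- All permutations of length `< N`. -/
def allBelow (N : ℕ) : Finset PPerm := (Finset.range N).sigma fun _ => Finset.univ

lemma mem_allBelow {N : ℕ} {π : PPerm} : π ∈ allBelow N ↔ π.1 < N := by
  simp [allBelow]

lemma mu_of_not_le {π : PPerm} (h : ¬ PPerm.Le PPerm.one π) (hne : PPerm.one ≠ π) :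
    mu PPerm.one π = 0 := by
  unfold mu
  simp only [muAux, if_neg hne, if_neg h]

lemma mu_rec {π : PPerm} (h : 2 ≤ π.1) :
    mu PPerm.one π = - ∑ l ∈ allBelow π.1, if PPerm.Le l π then mu PPerm.one l else 0 := by
  have hne : PPerm.one ≠ π := by
    intro e
    rw [← e] at h
    exact absurd h (by simp [PPerm.one])
  conv_lhs => unfold mu
  simp only [muAux, if_neg hne, if_pos (one_le_pperm (by omega : 1 ≤ π.1))]
  rw [allBelow, Finset.sum_sigma]
  congr 1
  refine Finset.sum_congr rfl fun m hm => ?_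
  have hm := Finset.mem_range.1 hm
  rw [Finset.sum_filter]
  refine Finset.sum_congr rfl fun p _ => ?_
  rw [muAux_stable π.1 ⟨m, p⟩ (by simp only; omega)]
  by_cases h1 : PPerm.Le PPerm.one ⟨m, p⟩
  · simp [h1]
  · have h2 : PPerm.one ≠ ⟨m, p⟩ := by
      intro e
      apply h1
      rw [← e]
      exact one_le_pperm (by simp [PPerm.one])
    simp [h1, mu_of_not_le h1 h2]

lemma sum_zero {ρ : PPerm} (h : 2 ≤ ρ.1) {N : ℕ} (hN : ρ.1 ≤ N) :
    (∑ l ∈ allBelow (N + 1), if PPerm.Le l ρ then mu PPerm.one l else 0) = 0 := by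
  have hsub : insert ρ (allBelow ρ.1) ⊆ allBelow (N + 1) := by
    intro l hl
    rw [mem_allBelow]
    rcases Finset.mem_insert.1 hl with rfl | hl
    · omega
    · rw [mem_allBelow] at hl; omega
  rw [← Finset.sum_subset hsub]
  · rw [Finset.sum_insert (by rw [mem_allBelow]; omega)]
    have : PPerm.Le ρ ρ := ⟨id, strictMono_id, fun _ _ => Iff.rfl⟩
    rw [if_pos this, mu_rec h]
    ring
  · intro l _ hl
    rw [Finset.mem_insert, not_or, mem_allBelow] at hl
    refine if_neg fun hle => hl.1 (le_eq hle ?_)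
    have := le_card hle
    omega

/-- Indicator of embeddability. -/
noncomputable def ind (l π : PPerm) (S : Finset (Fin π.1)) : ℤ := if SubEmb l π S then 1 else 0

lemma key (π : PPerm) (h2 : 2 ≤ π.1) {ι : Type} [Fintype ι] (c : ι → ℤ)
    (S : ι → Finset (Fin π.1)) (hS : ∀ k, 2 ≤ (S k).card ∧ (S k).card < π.1)
    (H : ∀ l : PPerm, l.1 < π.1 → mu PPerm.one l ≠ 0 →
      ind l π Finset.univ = ∑ k, c k * ind l π (S k)) :
    mu PPerm.one π = 0 := by
  have hz : ∀ k, ∑ l ∈ allBelow π.1, ind l π (S k) * mu PPerm.one l = 0 := by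
    intro k
    obtain ⟨ρ, hρ, hle⟩ := exists_std π (S k)
    obtain ⟨N, hN⟩ : ∃ N, π.1 = N + 1 := ⟨π.1 - 1, by omega⟩
    have h3 := hS k
    have := sum_zero (ρ := ρ) (by omega) (N := N) (by omega)
    rw [← hN] at this
    rw [← this]
    refine Finset.sum_congr rfl fun l _ => ?_
    rw [ind]
    simp only [hle]
    split_ifs <;> simp
  rw [mu_rec h2]
  have : (∑ l ∈ allBelow π.1, if PPerm.Le l π then mu PPerm.one l else 0)
      = ∑ l ∈ allBelow π.1, ∑ k, c k * (ind l π (S k) * mu PPerm.one l) := by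
    refine Finset.sum_congr rfl fun l hl => ?_
    by_cases h0 : mu PPerm.one l = 0
    · simp [h0]
    · have hh := H l (mem_allBelow.1 hl) h0
      have e : (if PPerm.Le l π then mu PPerm.one l else 0)
          = ind l π Finset.univ * mu PPerm.one l := by
        have : PPerm.Le l π ↔ SubEmb l π Finset.univ := by
          constructor
          · rintro ⟨f, h1, h2⟩; exact ⟨f, ⟨h1, h2⟩, fun _ => Finset.mem_univ _⟩
          · rintro ⟨f, ⟨h1, h2⟩, -⟩; exact ⟨f, h1, h2⟩
        rw [ind]
        simp only [this]
        split_ifs <;> simp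
      rw [e, hh, Finset.sum_mul]
      simp only [mul_assoc]
  rw [this, Finset.sum_comm]
  simp [← Finset.mul_sum, hz]

/-! ### Moving embeddings inside a block -/

/-- `u` maps the part `m` of the word `w` order-isomorphically into `M`. -/
def Good {k : ℕ} (w : Fin k → ℕ) (m M : Finset (Fin k)) (u : Fin k → Fin k) : Prop :=
  (∀ a ∈ m, u a ∈ M) ∧
    ∀ a ∈ m, ∀ b ∈ m, (a < b → u a < u b) ∧ (w a < w b → w (u a) < w (u b))

instance {k : ℕ} (w : Fin k → ℕ) (m M : Finset (Fin k)) (u : Fin k → Fin k) :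
    Decidable (Good w m M u) := by
  unfold Good; infer_instance

lemma move1 {k : ℕ} {π l : PPerm} {w : Fin k → ℕ} {g : Fin k → Fin π.1} (hg : IsBlk π w g)
    {f : Fin l.1 → Fin π.1} (hf : IsEmb l π f) {m M : Finset (Fin k)} {u : Fin k → Fin k}
    (hu : Good w m M u) (hm : ∀ x a, f x = g a → a ∈ m) :
    ∃ f', IsEmb l π f' ∧ (∀ x a, f' x = g a → a ∈ M) ∧
      ∀ x y, (∀ a, g a ≠ y) → f' x = y → f x = y := by
  obtain ⟨gm, gv, gi⟩ := hg
  let f' : Fin l.1 → Fin π.1 := fun x => if h : ∃ a, f x = g a then g (u h.choose) else f x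
  have hcase : ∀ x, (∃ a ∈ m, f x = g a ∧ f' x = g (u a)) ∨ ((∀ a, g a ≠ f x) ∧ f' x = f x) := by
    intro x
    by_cases h : ∃ a, f x = g a
    · left
      refine ⟨h.choose, hm _ _ h.choose_spec, h.choose_spec, ?_⟩
      simp only [f', dif_pos h]
    · right
      refine ⟨fun a ha => h ⟨a, ha.symm⟩, ?_⟩
      simp only [f', dif_neg h]
  refine ⟨f', mkEmb ?_ ?_, ?_, ?_⟩
  · intro x y hxy
    have hlt := hf.1 hxy
    rcases hcase x with ⟨a, ha, hx, hx'⟩ | ⟨hx, hx'⟩ <;>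
    rcases hcase y with ⟨b, hb, hy, hy'⟩ | ⟨hy, hy'⟩ <;> rw [hx', hy']
    · rw [hx, hy] at hlt
      exact gm ((hu.2 a ha b hb).1 (gm.lt_iff_lt.1 hlt))
    · rcases (gi _ hy).1 with h | h
      · exact absurd hlt (not_lt.2 (by rw [hx]; exact (h a).le))
      · exact h _
    · rcases (gi _ hx).1 with h | h
      · exact h _
      · exact absurd hlt (not_lt.2 (by rw [hy]; exact (h b).le))
    · exact hlt
  · intro x y hxy
    have hlt := (hf.2 _ _).1 hxy
    rcases hcase x with ⟨a, ha, hx, hx'⟩ | ⟨hx, hx'⟩ <;>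
    rcases hcase y with ⟨b, hb, hy, hy'⟩ | ⟨hy, hy'⟩ <;> rw [hx', hy']
    · rw [hx, hy] at hlt
      exact (gv _ _).1 ((hu.2 a ha b hb).2 ((gv _ _).2 hlt))
    · rcases (gi _ hy).2 with h | h
      · exact absurd hlt (not_lt.2 (by rw [hx]; exact (h a).le))
      · exact h _
    · rcases (gi _ hx).2 with h | h
      · exact h _
      · exact absurd hlt (not_lt.2 (by rw [hy]; exact (h b).le))
    · exact hlt
  · intro x a hxa
    rcases hcase x with ⟨b, hb, hx, hx'⟩ | ⟨hx, hx'⟩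
    · rw [hx'] at hxa
      rw [← gm.injective hxa]
      exact hu.1 b hb
    · rw [hx'] at hxa
      exact absurd hxa.symm (hx a)
  · intro x y hy hxy
    rcases hcase x with ⟨b, hb, hx, hx'⟩ | ⟨hx, hx'⟩
    · exact absurd (hx'.symm.trans hxy) (hy _)
    · rw [← hx']; exact hxy

/-- Positions of `π` meeting the two blocks only inside `M₁`, `M₂`. -/
noncomputable def cut {k k' n : ℕ} (g : Fin k → Fin n) (h : Fin k' → Fin n)
    (M : Finset (Fin k)) (M' : Finset (Fin k')) : Finset (Fin n) :=
  Finset.univ.filter fun x => (∀ a, x = g a → a ∈ M) ∧ ∀ b, x = h b → b ∈ M'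

lemma mem_cut {k k' n : ℕ} {g : Fin k → Fin n} {h : Fin k' → Fin n}
    {M : Finset (Fin k)} {M' : Finset (Fin k')} {x : Fin n} :
    x ∈ cut g h M M' ↔ (∀ a, x = g a → a ∈ M) ∧ ∀ b, x = h b → b ∈ M' := by
  simp [cut]

lemma cut_univ {k k' n : ℕ} {g : Fin k → Fin n} {h : Fin k' → Fin n} :
    cut g h Finset.univ Finset.univ = Finset.univ := by
  ext x; simp [mem_cut]

/-- `l` embeds in `π` meeting the blocks in exactly the masks `m`, `m'`. -/
def Exact {k k' : ℕ} (l π : PPerm) (g : Fin k → Fin π.1) (h : Fin k' → Fin π.1)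
    (m : Finset (Fin k)) (m' : Finset (Fin k')) : Prop :=
  ∃ f, IsEmb l π f ∧ (∀ a, a ∈ m ↔ ∃ x, f x = g a) ∧ (∀ a, a ∈ m' ↔ ∃ x, f x = h a)

lemma exists_exact {k k' : ℕ} {l π : PPerm} {g : Fin k → Fin π.1} {h : Fin k' → Fin π.1}
    {M : Finset (Fin k)} {M' : Finset (Fin k')} (H : SubEmb l π (cut g h M M')) :
    ∃ m m', m ⊆ M ∧ m' ⊆ M' ∧ Exact l π g h m m' := by
  obtain ⟨f, hf, hS⟩ := H
  refine ⟨Finset.univ.filter fun a => ∃ x, f x = g a, Finset.univ.filter fun a => ∃ x, f x = h a,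
    ?_, ?_, f, hf, by simp, by simp⟩
  · intro a ha
    obtain ⟨x, hx⟩ := (Finset.mem_filter.1 ha).2
    exact (mem_cut.1 (hS x)).1 a hx
  · intro a ha
    obtain ⟨x, hx⟩ := (Finset.mem_filter.1 ha).2
    exact (mem_cut.1 (hS x)).2 a hx

lemma cut_mono {k k' : ℕ} {l π : PPerm} {g : Fin k → Fin π.1} {h : Fin k' → Fin π.1}
    {M N : Finset (Fin k)} {M' N' : Finset (Fin k')} (h1 : M ⊆ N) (h2 : M' ⊆ N')
    (H : SubEmb l π (cut g h M M')) : SubEmb l π (cut g h N N') := by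
  obtain ⟨f, hf, hS⟩ := H
  refine ⟨f, hf, fun x => ?_⟩
  have := mem_cut.1 (hS x)
  exact mem_cut.2 ⟨fun a ha => h1 (this.1 a ha), fun a ha => h2 (this.2 a ha)⟩

lemma move2 {k k' : ℕ} {l π : PPerm} {w : Fin k → ℕ} {w' : Fin k' → ℕ}
    {g : Fin k → Fin π.1} {h : Fin k' → Fin π.1}
    (hg : IsBlk π w g) (hh : IsBlk π w' h) (hd : ∀ a b, g a ≠ h b)
    {m : Finset (Fin k)} {m' : Finset (Fin k')} (H : Exact l π g h m m')
    {M : Finset (Fin k)} {M' : Finset (Fin k')} {u : Fin k → Fin k} {v : Fin k' → Fin k'}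
    (hu : Good w m M u) (hv : Good w' m' M' v) : SubEmb l π (cut g h M M') := by
  obtain ⟨f, hf, h1, h2⟩ := H
  obtain ⟨f1, hf1, ha, hb⟩ := move1 hg hf hu (fun x a hx => (h1 a).2 ⟨x, hx⟩)
  obtain ⟨f2, hf2, hc, hd'⟩ := move1 hh hf1 hv
    (fun x a hx => (h2 a).2 ⟨x, hb x (h a) (fun c => hd c a) hx⟩)
  refine ⟨f2, hf2, fun x => mem_cut.2 ⟨fun a hx => ?_, fun b hx => hc x b hx⟩⟩
  exact ha x a (hd' x (g a) (fun c => (hd a c).symm) hx)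

/-- `c` selects an interval copy of `w'` inside the part `m` of the word `w`. -/
def SubBlk {k k' : ℕ} (w : Fin k → ℕ) (w' : Fin k' → ℕ) (m : Finset (Fin k))
    (c : Fin k' → Fin k) : Prop :=
  (∀ a, c a ∈ m) ∧ (∀ a b, a < b → c a < c b) ∧ (∀ a b, w' a < w' b ↔ w (c a) < w (c b)) ∧
  ∀ x ∈ m, (∀ a, c a ≠ x) → ((∀ a, x < c a) ∨ ∀ a, c a < x) ∧
    ((∀ a, w x < w (c a)) ∨ ∀ a, w (c a) < w x)

instance {k k' : ℕ} (w : Fin k → ℕ) (w' : Fin k' → ℕ) (m : Finset (Fin k))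
    (c : Fin k' → Fin k) : Decidable (SubBlk w w' m c) := by
  unfold SubBlk; infer_instance

/-- `l` has an interval copy of the word `w`. -/
def Has {k : ℕ} (l : PPerm) (w : Fin k → ℕ) : Prop := ∃ g, IsBlk l w g

lemma inherit {k k' : ℕ} {l π : PPerm} {w : Fin k → ℕ} {w' : Fin k' → ℕ}
    {g : Fin k → Fin π.1} (hg : IsBlk π w g) {f : Fin l.1 → Fin π.1} (hf : IsEmb l π f)
    {m : Finset (Fin k)} (hm : ∀ a, a ∈ m ↔ ∃ x, f x = g a) {c : Fin k' → Fin k}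
    (hc : SubBlk w w' m c) : Has l w' := by
  obtain ⟨gm, gv, gi⟩ := hg
  obtain ⟨c1, c2, c3, c4⟩ := hc
  choose g' hg' using fun a => (hm (c a)).1 (c1 a)
  refine ⟨g', ?_, ?_, ?_⟩
  · intro a b hab
    rw [← hf.1.lt_iff_lt, hg', hg']
    exact gm (c2 _ _ hab)
  · intro a b
    rw [hf.2, hg', hg', c3, gv]
  · intro x hx
    simp only [hf.2]
    simp only [← hf.1.lt_iff_lt, hg']
    by_cases h : ∃ y, f x = g y
    · obtain ⟨y, hy⟩ := h
      rw [hy]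
      have := c4 y ((hm y).2 ⟨x, hy⟩) (fun a ha => hx a (hf.1.injective (by rw [hg', hy, ha])))
      simpa only [gm.lt_iff_lt, ← gv] using this
    · have := gi (f x) (fun a ha => h ⟨a, ha.symm⟩)
      exact ⟨this.1.imp (fun h a => h _) (fun h a => h _),
        this.2.imp (fun h a => h _) (fun h a => h _)⟩

lemma Exact.left {k k' k'' : ℕ} {l π : PPerm} {w : Fin k → ℕ} {w' : Fin k'' → ℕ}
    {g : Fin k → Fin π.1} {h : Fin k' → Fin π.1} {m : Finset (Fin k)} {m' : Finset (Fin k')}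
    (H : Exact l π g h m m') (hg : IsBlk π w g) {c : Fin k'' → Fin k}
    (hc : SubBlk w w' m c) : Has l w' := by
  obtain ⟨f, hf, h1, h2⟩ := H
  exact inherit hg hf h1 hc

lemma Exact.right {k k' k'' : ℕ} {l π : PPerm} {w : Fin k' → ℕ} {w' : Fin k'' → ℕ}
    {g : Fin k → Fin π.1} {h : Fin k' → Fin π.1} {m : Finset (Fin k)} {m' : Finset (Fin k')}
    (H : Exact l π g h m m') (hh : IsBlk π w h) {c : Fin k'' → Fin k'}
    (hc : SubBlk w w' m' c) : Has l w' := by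
  obtain ⟨f, hf, h1, h2⟩ := H
  exact inherit hh hf h2 hc

/-! ### Consecutiveness and disjointness -/

lemma IsBlk.pos_succ {k : ℕ} {π : PPerm} {w : Fin k → ℕ} {g : Fin k → Fin π.1}
    (hg : IsBlk π w g) (a b : Fin k) (h : (b : ℕ) = a + 1) : (g b : ℕ) = g a + 1 := by
  obtain ⟨gm, gv, gi⟩ := hg
  have hab : g a < g b := gm (Fin.lt_def.2 (by omega))
  have hab' := Fin.lt_def.1 hab
  by_contra hne
  let x : Fin π.1 := ⟨g a + 1, by have := (g b).2; omega⟩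
  have hax : g a < x := Fin.lt_def.2 (by simp [x])
  have hxb : x < g b := Fin.lt_def.2 (by simp only [x]; omega)
  by_cases hx : ∀ c, g c ≠ x
  · rcases (gi x hx).1 with h | h
    · exact lt_asymm hax (h a)
    · exact lt_asymm hxb (h b)
  · push Not at hx
    obtain ⟨c, hc⟩ := hx
    rw [← hc, gm.lt_iff_lt, Fin.lt_def] at hax hxb
    omega

lemma IsBlk.val_succ {k : ℕ} {π : PPerm} {w : Fin k → ℕ} {g : Fin k → Fin π.1}
    (hg : IsBlk π w g) (a b : Fin k) (h : w b = w a + 1) :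
    (π.2 (g b) : ℕ) = π.2 (g a) + 1 := by
  obtain ⟨gm, gv, gi⟩ := hg
  have hab : π.2 (g a) < π.2 (g b) := (gv _ _).1 (by omega)
  have hab' := Fin.lt_def.1 hab
  by_contra hne
  obtain ⟨x, hx⟩ := π.2.surjective ⟨π.2 (g a) + 1, by have := (π.2 (g b)).2; omega⟩
  have hax : π.2 (g a) < π.2 x := by rw [hx]; exact Fin.lt_def.2 (by simp)
  have hxb : π.2 x < π.2 (g b) := by rw [hx]; exact Fin.lt_def.2 (by simp only; omega)
  by_cases hx : ∀ c, g c ≠ x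
  · rcases (gi x hx).2 with h | h
    · exact lt_asymm hax (h a)
    · exact lt_asymm hxb (h b)
  · push Not at hx
    obtain ⟨c, hc⟩ := hx
    rw [← hc, ← gv] at hax hxb
    omega

lemma inj_iff {π : PPerm} (x y : Fin π.1) : (x : ℕ) = y ↔ (π.2 x : ℕ) = π.2 y := by
  rw [← Fin.ext_iff, ← Fin.ext_iff, π.2.injective.eq_iff]

lemma disj_adj {π : PPerm} {g h : Fin 2 → Fin π.1} (hg : IsBlk π ![0, 1] g)
    (hh : IsBlk π ![1, 0] h) : ∀ a b, g a ≠ h b := by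
  have p1 := hg.pos_succ 0 1 rfl
  have p2 := hh.pos_succ 0 1 rfl
  have v1 := hg.val_succ 0 1 rfl
  have v2 := hh.val_succ 1 0 rfl
  have e00 := inj_iff (g 0) (h 0)
  have e01 := inj_iff (g 0) (h 1)
  have e10 := inj_iff (g 1) (h 0)
  have e11 := inj_iff (g 1) (h 1)
  intro a b hab
  have hab := Fin.ext_iff.1 hab
  fin_cases a <;> fin_cases b <;> simp at hab <;> omega

lemma disj_pair {π : PPerm} {g : Fin 3 → Fin π.1} {h : Fin 4 → Fin π.1}
    (hg : IsBlk π ![1, 0, 2] g) (hh : IsBlk π ![1, 3, 2, 0] h) : ∀ a b, g a ≠ h b := by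
  have p1 := hg.pos_succ 0 1 rfl
  have p2 := hg.pos_succ 1 2 rfl
  have q1 := hh.pos_succ 0 1 rfl
  have q2 := hh.pos_succ 1 2 rfl
  have q3 := hh.pos_succ 2 3 rfl
  have v1 := hg.val_succ 1 0 rfl
  have v2 := hg.val_succ 0 2 rfl
  have w1 := hh.val_succ 3 0 rfl
  have w2 := hh.val_succ 0 2 rfl
  have w3 := hh.val_succ 2 1 rfl
  have e := fun a b => inj_iff (g a) (h b)
  have e00 := e 0 0
  have e01 := e 0 1
  have e02 := e 0 2
  have e03 := e 0 3
  have e10 := e 1 0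
  have e11 := e 1 1
  have e12 := e 1 2
  have e13 := e 1 3
  have e20 := e 2 0
  have e21 := e 2 1
  have e22 := e 2 2
  have e23 := e 2 3
  clear e
  intro a b hab
  have hab := Fin.ext_iff.1 hab
  fin_cases a <;> fin_cases b <;> simp at hab <;> omega

lemma isBlk_of_copy {π : PPerm} {k : ℕ} {s : Equiv.Perm (Fin k)} {i : ℕ}
    (H : HasIntervalCopyAt π ⟨k, s⟩ i) (w : Fin k → ℕ) (hw : ∀ a, (s a : ℕ) = w a) :
    ∃ g, IsBlk π w g ∧ ∀ a, (g a : ℕ) = i + a := by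
  obtain ⟨f, v, hp, hv, ho⟩ := H
  simp only at f hp hv ho
  have fm : StrictMono f := by
    intro a b hab
    rw [Fin.lt_def, hp, hp]
    have := Fin.lt_def.1 hab
    omega
  refine ⟨f, ⟨fm, ?_, ?_⟩, hp⟩
  · intro a b
    rw [← ho, Fin.lt_def, hw, hw]
  · intro x hx
    constructor
    · rcases lt_or_ge (x : ℕ) i with h | h
      · left; intro a; rw [Fin.lt_def, hp]; omega
      · right; intro a
        rw [Fin.lt_def, hp]
        by_contra hc
        refine hx ⟨x - i, by have := a.2; omega⟩ (Fin.ext ?_)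
        rw [hp]
        simp only
        omega
    · have himg : Finset.univ.image (fun a => (π.2 (f a) : ℕ)) = Finset.Ico v (v + k) := by
        apply Finset.eq_of_subset_of_card_le
        · intro y hy
          obtain ⟨a, -, rfl⟩ := Finset.mem_image.1 hy
          exact Finset.mem_Ico.2 (hv a)
        · rw [Finset.card_image_of_injective]
          · simp
          · intro a b hab
            exact fm.injective (π.2.injective (Fin.ext hab))
      have hxv : (π.2 x : ℕ) ∉ Finset.Ico v (v + k) := by
        rw [← himg]
        intro hy
        obtain ⟨a, -, ha⟩ := Finset.mem_image.1 hy
        exact hx a (π.2.injective (Fin.ext ha))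
      rw [Finset.mem_Ico] at hxv
      rcases lt_or_ge (π.2 x : ℕ) v with h | h
      · left; intro a; rw [Fin.lt_def]; have := hv a; omega
      · right; intro a; rw [Fin.lt_def]; have := hv a; omega

/-! ### Sizes of the cut sets -/

lemma card_cut_ge {k k' : ℕ} {n : ℕ} {g : Fin k → Fin n} {h : Fin k' → Fin n}
    (hgi : Function.Injective g) (hhi : Function.Injective h) (hd : ∀ a b, g a ≠ h b)
    {M : Finset (Fin k)} {M' : Finset (Fin k')} (a : Fin k) (ha : a ∈ M) (b : Fin k')
    (hb : b ∈ M') : 2 ≤ (cut g h M M').card := by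
  have : ({g a, h b} : Finset (Fin n)) ⊆ cut g h M M' := by
    intro x hx
    simp only [Finset.mem_insert, Finset.mem_singleton] at hx
    rcases hx with rfl | rfl
    · exact mem_cut.2 ⟨fun c hc => by rw [← hgi hc]; exact ha, fun c hc => absurd hc (hd a c)⟩
    · exact mem_cut.2 ⟨fun c hc => absurd hc.symm (hd c b), fun c hc => by rw [← hhi hc]; exact hb⟩
  have h2 := Finset.card_le_card this
  rwa [Finset.card_pair (hd a b)] at h2

lemma card_cut_lt_left {k k' : ℕ} {n : ℕ} {g : Fin k → Fin n} {h : Fin k' → Fin n}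
    {M : Finset (Fin k)} {M' : Finset (Fin k')} (a : Fin k) (ha : a ∉ M) :
    (cut g h M M').card < n := by
  have : cut g h M M' ⊂ Finset.univ := by
    rw [Finset.ssubset_univ_iff]
    intro e
    have := Finset.mem_univ (g a)
    rw [← e] at this
    exact ha ((mem_cut.1 this).1 a rfl)
  simpa using Finset.card_lt_card this

lemma card_cut_lt_right {k k' : ℕ} {n : ℕ} {g : Fin k → Fin n} {h : Fin k' → Fin n}
    {M : Finset (Fin k)} {M' : Finset (Fin k')} (a : Fin k') (ha : a ∉ M') :
    (cut g h M M').card < n := by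
  have : cut g h M M' ⊂ Finset.univ := by
    rw [Finset.ssubset_univ_iff]
    intro e
    have := Finset.mem_univ (h a)
    rw [← e] at this
    exact ha ((mem_cut.1 this).2 a rfl)
  simpa using Finset.card_lt_card this

lemma ind_congr {l π : PPerm} {S T : Finset (Fin π.1)} (h : SubEmb l π S ↔ SubEmb l π T) :
    ind l π S = ind l π T := by
  simp [ind, h]

/-! ### Finite facts about the words involved -/

/-- The word of `213`. -/
abbrev wA : Fin 3 → ℕ := ![1, 0, 2]
/-- The word of `2431`. -/
abbrev wB : Fin 4 → ℕ := ![1, 3, 2, 0]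
/-- The word of `321`. -/
abbrev wC : Fin 3 → ℕ := ![2, 1, 0]
/-- The word of `12`. -/
abbrev wU : Fin 2 → ℕ := ![0, 1]
/-- The word of `21`. -/
abbrev wD : Fin 2 → ℕ := ![1, 0]

lemma fA1 : ∀ m : Finset (Fin 3), (∃ c, SubBlk wA wD m c) ∨ Good wA m {0, 2} ![0, 0, 2] := by
  decide +kernel
lemma fA2 : ∀ m : Finset (Fin 3), m ⊆ {0, 1} →
    (∃ c, SubBlk wA wD m c) ∨ Good wA m {0} ![0, 0, 0] := by
  decide +kernel
lemma fA3 : ∀ m : Finset (Fin 3), m ⊆ {0, 2} →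
    (∃ c, SubBlk wA wU m c) ∨ Good wA m {0} ![0, 0, 0] := by
  decide +kernel
lemma fA4 : ∀ m : Finset (Fin 3),
    (∃ c, SubBlk wA wU m c) ∨ SubBlk wA wA m id ∨ Good wA m {0, 1} ![0, 1, 0] := by
  decide +kernel
lemma fB1 : ∀ m : Finset (Fin 4),
    (∃ c, SubBlk wB wD m c) ∨ Good wB m {0, 1, 3} ![0, 1, 1, 3] := by
  decide +kernel
lemma fB2 : ∀ m : Finset (Fin 4), m ⊆ {0, 1, 2} →
    (∃ c, SubBlk wB wD m c) ∨ Good wB m {0, 1} ![0, 1, 1, 1] := by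
  decide +kernel
lemma fB4 : ∀ m : Finset (Fin 4),
    (∃ c, SubBlk wB wU m c) ∨ SubBlk wB wC m ![1, 2, 3] ∨ SubBlk wB wB m id ∨
      Good wB m {0, 1, 2} id ∨ Good wB m {0, 1, 2} ![1, 1, 1, 2] := by
  decide +kernel
lemma fC : ∀ m : Finset (Fin 3),
    SubBlk wC wC m id ∨ Good wC m {0, 1} ![0, 1, 1] ∨ Good wC m {0, 1} ![0, 0, 1] := by
  decide +kernel
lemma fU : ∀ m : Finset (Fin 2), SubBlk wU wU m id ∨ Good wU m {0} ![0, 0] := by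
  decide +kernel
lemma fD : ∀ m : Finset (Fin 2), SubBlk wD wD m id ∨ Good wD m {0} ![0, 0] := by
  decide +kernel

lemma good_id {k : ℕ} (w : Fin k → ℕ) {m M : Finset (Fin k)} (h : m ⊆ M) : Good w m M id :=
  ⟨fun _ ha => h ha, fun _ _ _ _ => ⟨id, id⟩⟩

/-! ### Vanishing: an interval copy of `321` -/

lemma mu_321 : ∀ (n : ℕ) (π : PPerm), π.1 = n → Has π wC → mu PPerm.one π = 0 := by
  intro n
  induction n using Nat.strong_induction_on with
  | _ n ih =>
    rintro π rfl ⟨g, hg⟩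
    let h : Fin 0 → Fin π.1 := fun a => a.elim0
    have hh : IsBlk π (fun a : Fin 0 => a.elim0) h :=
      ⟨fun a => a.elim0, fun a => a.elim0, fun x _ => ⟨Or.inl fun a => a.elim0,
        Or.inl fun a => a.elim0⟩⟩
    have hd : ∀ a b, g a ≠ h b := fun a b => b.elim0
    have hlt : (cut g h {0, 1} Finset.univ).card < π.1 := card_cut_lt_left 2 (by decide)
    have hge : 2 ≤ (cut g h {0, 1} Finset.univ).card := by
      have : ({g 0, g 1} : Finset (Fin π.1)) ⊆ cut g h {0, 1} Finset.univ := by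
        intro x hx
        simp only [Finset.mem_insert, Finset.mem_singleton] at hx
        refine mem_cut.2 ⟨fun c hc => ?_, fun c => c.elim0⟩
        rcases hx with rfl | rfl
        · rw [← hg.1.injective hc]; decide
        · rw [← hg.1.injective hc]; decide
      have h2 := Finset.card_le_card this
      rwa [Finset.card_pair (fun e => absurd (hg.1.injective e) (by decide))] at h2
    refine key π (by omega) (ι := Unit) (fun _ => 1) (fun _ => cut g h {0, 1} Finset.univ)
      (fun _ => ⟨hge, hlt⟩) ?_
    intro l hl hmu
    simp only [Finset.univ_unique, Finset.sum_singleton, one_mul]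
    rw [← cut_univ (g := g) (h := h)]
    refine ind_congr ⟨fun H => ?_, cut_mono (Finset.subset_univ _) (Finset.subset_univ _)⟩
    obtain ⟨m, m', -, hm', hE⟩ := exists_exact H
    rcases fC m with h1 | h1 | h1
    · exact absurd (ih _ hl l rfl (hE.left hg h1)) hmu
    · exact move2 hg hh hd hE h1 (good_id _ hm')
    · exact move2 hg hh hd hE h1 (good_id _ hm')

/-! ### Vanishing: opposing adjacencies -/

lemma mu_adj : ∀ (n : ℕ) (π : PPerm), π.1 = n → Has π wU → Has π wD → mu PPerm.one π = 0 := by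
  intro n
  induction n using Nat.strong_induction_on with
  | _ n ih =>
    rintro π rfl ⟨g, hg⟩ ⟨h, hh⟩
    have hd := disj_adj hg hh
    let S : Fin 3 → Finset (Fin π.1) := ![cut g h {0} Finset.univ, cut g h Finset.univ {0},
      cut g h {0} {0}]
    have hS : ∀ k, 2 ≤ (S k).card ∧ (S k).card < π.1 := by
      intro k
      fin_cases k
      · exact ⟨card_cut_ge hg.1.injective hh.1.injective hd 0 (by decide) 0 (by decide),
          card_cut_lt_left 1 (by decide)⟩
      · exact ⟨card_cut_ge hg.1.injective hh.1.injective hd 0 (by decide) 0 (by decide),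
          card_cut_lt_right 1 (by decide)⟩
      · exact ⟨card_cut_ge hg.1.injective hh.1.injective hd 0 (by decide) 0 (by decide),
          card_cut_lt_left 1 (by decide)⟩
    have h2 := hS 0
    refine key π (by omega) ![1, 1, -1] S hS ?_
    intro l hl hmu
    rw [← cut_univ (g := g) (h := h)]
    simp only [Fin.sum_univ_three, S, Matrix.cons_val]
    by_cases hD : Has l wD
    · have hU : ¬ Has l wU := fun hU => hmu (ih _ hl l rfl hU hD)
      have e : ∀ M' : Finset (Fin 2),
          ind l π (cut g h Finset.univ M') = ind l π (cut g h {0} M') := by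
        intro M'
        refine ind_congr ⟨fun H => ?_, cut_mono (Finset.subset_univ _) (Finset.Subset.refl _)⟩
        obtain ⟨m, m', -, hm', hE⟩ := exists_exact H
        rcases fU m with h1 | h1
        · exact absurd (hE.left hg h1) hU
        · exact move2 hg hh hd hE h1 (good_id _ hm')
      rw [e, e]; ring
    · have e : ∀ M : Finset (Fin 2),
          ind l π (cut g h M Finset.univ) = ind l π (cut g h M {0}) := by
        intro M
        refine ind_congr ⟨fun H => ?_, cut_mono (Finset.Subset.refl _) (Finset.subset_univ _)⟩
        obtain ⟨m, m', hm, -, hE⟩ := exists_exact H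
        rcases fD m' with h1 | h1
        · exact absurd (hE.right hh h1) hD
        · exact move2 hg hh hd hE (good_id _ hm) h1
      rw [e, e]; ring

/-! ### Vanishing: the pair `213`, `2431` -/

lemma mu_pair : ∀ (n : ℕ) (π : PPerm), π.1 = n → Has π wA → Has π wB → mu PPerm.one π = 0 := by
  intro n
  induction n using Nat.strong_induction_on with
  | _ n ih =>
    rintro π rfl ⟨g, hg⟩ ⟨h, hh⟩
    have hd := disj_pair hg hh
    let S : Fin 7 → Finset (Fin π.1) := ![cut g h {0, 2} {0, 1, 3}, cut g h {0, 1} Finset.univ,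
      cut g h Finset.univ {0, 1, 2}, cut g h {0} {0, 1, 3}, cut g h {0, 2} {0, 1},
      cut g h {0, 1} {0, 1, 2}, cut g h {0} {0, 1}]
    have hS : ∀ k, 2 ≤ (S k).card ∧ (S k).card < π.1 := by
      intro k
      have hge := fun (M : Finset (Fin 3)) (M' : Finset (Fin 4)) (a : (0 : Fin 3) ∈ M)
        (b : (0 : Fin 4) ∈ M') =>
        card_cut_ge hg.1.injective hh.1.injective hd (M := M) (M' := M') 0 a 0 b
      fin_cases k
      · exact ⟨hge _ _ (by decide) (by decide), card_cut_lt_left 1 (by decide)⟩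
      · exact ⟨hge _ _ (by decide) (by decide), card_cut_lt_left 2 (by decide)⟩
      · exact ⟨hge _ _ (by decide) (by decide), card_cut_lt_right 3 (by decide)⟩
      · exact ⟨hge _ _ (by decide) (by decide), card_cut_lt_left 1 (by decide)⟩
      · exact ⟨hge _ _ (by decide) (by decide), card_cut_lt_left 1 (by decide)⟩
      · exact ⟨hge _ _ (by decide) (by decide), card_cut_lt_left 2 (by decide)⟩
      · exact ⟨hge _ _ (by decide) (by decide), card_cut_lt_left 1 (by decide)⟩
    have h2 := hS 0
    refine key π (by omega) ![1, 1, 1, -1, -1, -1, 1] S hS ?_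
    intro l hl hmu
    rw [← cut_univ (g := g) (h := h)]
    simp only [Fin.sum_univ_seven, S, Matrix.cons_val]
    by_cases hU : Has l wU
    · -- `l` has an ascending adjacency, hence no descending one
      have hD : ¬ Has l wD := fun hD => hmu (mu_adj _ l rfl hU hD)
      have dA : ∀ {m m'}, Exact l π g h m m' → ¬ ∃ c, SubBlk wA wD m c :=
        fun hE ⟨c, hc⟩ => hD (hE.left hg hc)
      have dB : ∀ {m m'}, Exact l π g h m m' → ¬ ∃ c, SubBlk wB wD m' c :=
        fun hE ⟨c, hc⟩ => hD (hE.right hh hc)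
      have e1 : ind l π (cut g h Finset.univ Finset.univ)
          = ind l π (cut g h {0, 2} {0, 1, 3}) := by
        refine ind_congr ⟨fun H => ?_, cut_mono (by decide) (by decide)⟩
        obtain ⟨m, m', hm, hm', hE⟩ := exists_exact H
        exact move2 hg hh hd hE ((fA1 m).resolve_left (dA hE)) ((fB1 m').resolve_left (dB hE))
      have e2 : ind l π (cut g h {0, 1} Finset.univ) = ind l π (cut g h {0} {0, 1, 3}) := by
        refine ind_congr ⟨fun H => ?_, cut_mono (by decide) (by decide)⟩
        obtain ⟨m, m', hm, hm', hE⟩ := exists_exact H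
        exact move2 hg hh hd hE ((fA2 m hm).resolve_left (dA hE)) ((fB1 m').resolve_left (dB hE))
      have e3 : ind l π (cut g h Finset.univ {0, 1, 2}) = ind l π (cut g h {0, 2} {0, 1}) := by
        refine ind_congr ⟨fun H => ?_, cut_mono (by decide) (by decide)⟩
        obtain ⟨m, m', hm, hm', hE⟩ := exists_exact H
        exact move2 hg hh hd hE ((fA1 m).resolve_left (dA hE))
          ((fB2 m' hm').resolve_left (dB hE))
      have e4 : ind l π (cut g h {0, 1} {0, 1, 2}) = ind l π (cut g h {0} {0, 1}) := by
        refine ind_congr ⟨fun H => ?_, cut_mono (by decide) (by decide)⟩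
        obtain ⟨m, m', hm, hm', hE⟩ := exists_exact H
        exact move2 hg hh hd hE ((fA2 m hm).resolve_left (dA hE))
          ((fB2 m' hm').resolve_left (dB hE))
      rw [e1, e2, e3, e4]; ring
    · -- `l` has no ascending adjacency
      have hC : ¬ Has l wC := fun hC => hmu (mu_321 _ l rfl hC)
      have hAB : ¬ (Has l wA ∧ Has l wB) := fun hAB => hmu (ih _ hl l rfl hAB.1 hAB.2)
      have e : ∀ M' : Finset (Fin 4),
          ind l π (cut g h {0, 2} M') = ind l π (cut g h {0} M') := by
        intro M'
        refine ind_congr ⟨fun H => ?_, cut_mono (by decide) (Finset.Subset.refl _)⟩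
        obtain ⟨m, m', hm, hm', hE⟩ := exists_exact H
        rcases fA3 m hm with ⟨c, h1⟩ | h1
        · exact absurd (hE.left hg h1) hU
        · exact move2 hg hh hd hE h1 (good_id _ hm')
      have sA : ¬ Has l wA → ∀ M', SubEmb l π (cut g h Finset.univ M') →
          SubEmb l π (cut g h {0, 1} M') := by
        intro hA M' H
        obtain ⟨m, m', hm, hm', hE⟩ := exists_exact H
        rcases fA4 m with ⟨c, h1⟩ | h1 | h1
        · exact absurd (hE.left hg h1) hU
        · exact absurd (hE.left hg h1) hA
        · exact move2 hg hh hd hE h1 (good_id _ hm')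
      have sB : ¬ Has l wB → ∀ M, SubEmb l π (cut g h M Finset.univ) →
          SubEmb l π (cut g h M {0, 1, 2}) := by
        intro hB M H
        obtain ⟨m, m', hm, hm', hE⟩ := exists_exact H
        rcases fB4 m' with ⟨c, h1⟩ | h1 | h1 | h1 | h1
        · exact absurd (hE.right hh h1) hU
        · exact absurd (hE.right hh h1) hC
        · exact absurd (hE.right hh h1) hB
        · exact move2 hg hh hd hE (good_id _ hm) h1
        · exact move2 hg hh hd hE (good_id _ hm) h1
      rw [e, e]
      by_cases hA : Has l wA
      · have hB : ¬ Has l wB := fun hB => hAB ⟨hA, hB⟩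
        have eqv : ∀ M : Finset (Fin 3),
            ind l π (cut g h M Finset.univ) = ind l π (cut g h M {0, 1, 2}) := fun M =>
          ind_congr ⟨sB hB M, cut_mono (Finset.Subset.refl _) (Finset.subset_univ _)⟩
        rw [eqv, eqv]; ring
      · have eqv : ∀ M' : Finset (Fin 4),
            ind l π (cut g h Finset.univ M') = ind l π (cut g h {0, 1} M') := fun M' =>
          ind_congr ⟨sA hA M', cut_mono (Finset.subset_univ _) (Finset.Subset.refl _)⟩
        rw [eqv, eqv]; ring

/-- **(Theorem `thm-pair`.)**  The permutations `213` and `2431` form an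
annihilator pair: any permutation of the form `τ_{i,j}[213, 2431]`, i.e. any
permutation containing an interval copy of `213` and an interval copy of
`2431` on disjoint sets of positions, has `μ(1,·) = 0`. -/
theorem annihilator_pair_213_2431 (π : PPerm) (i j : ℕ)
    (h213 : HasIntervalCopyAt π p213 i) (h2431 : HasIntervalCopyAt π p2431 j)
    (hdisj : i + 3 ≤ j ∨ j + 4 ≤ i) :
    mu PPerm.one π = 0 := by
  obtain ⟨g, hg, -⟩ := isBlk_of_copy h213 wA (by decide)
  obtain ⟨h, hh, -⟩ := isBlk_of_copy h2431 wB (by decide)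
  exact mu_pair _ π rfl ⟨g, hg⟩ ⟨h, hh⟩
end

section
/- For n ≥ 1, let Z′(n) be the proportion among all n! permutations of length n of those permutations that contain at least two adjacencies but do not have opposing adjacencies (i.e. all of their adjacencies are of the same type). Then liminf_{n→∞} Z′(n) ≥ 0.1944. -/
/-!
The permutation pattern poset and its Möbius function.

A permutation of length `n` is represented as an element of the symmetric
group on `Fin n`; the collection of all permutations of all lengths is the
sigma type `PPerm`.  Pattern containment `PPerm.Le` makes `PPerm` into the
permutation pattern poset, and `mu` is its Möbius function, defined by the
usual recursion `μ(σ,σ) = 1`, `μ(σ,π) = -∑_{σ ≤ λ < π} μ(σ,λ)` for `σ < π`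
and `μ(σ,π) = 0` otherwise.
-/

open scoped Classical

/-- `π` has an up-adjacency: consecutive positions `i, i+1` with
`π(i+1) = π(i) + 1`. -/
def HasUpAdj (π : PPerm) : Prop :=
  ∃ i j : Fin π.1, (j : ℕ) = (i : ℕ) + 1 ∧ (π.2 j : ℕ) = (π.2 i : ℕ) + 1

/-- `π` has a down-adjacency: consecutive positions `i, i+1` with
`π(i+1) = π(i) - 1`. -/
def HasDownAdj (π : PPerm) : Prop :=
  ∃ i j : Fin π.1, (j : ℕ) = (i : ℕ) + 1 ∧ (π.2 i : ℕ) = (π.2 j : ℕ) + 1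

/-- Position `i` starts an adjacency of `π`: `|π(i+1) − π(i)| = 1`. -/
def AdjAtPos (π : PPerm) (i : Fin π.1) : Prop :=
  ∃ j : Fin π.1, (j : ℕ) = (i : ℕ) + 1 ∧
    ((π.2 j : ℕ) = (π.2 i : ℕ) + 1 ∨ (π.2 i : ℕ) = (π.2 j : ℕ) + 1)

/-- `Z′(n)`: the proportion, among all `n!` permutations of length `n`, of
those having at least two adjacencies but no opposing adjacencies. -/
noncomputable def nonOpposingDensity (n : ℕ) : ℝ :=
  ((Finset.univ.filter fun p : Equiv.Perm (Fin n) =>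
      2 ≤ (Finset.univ.filter fun i : Fin n => AdjAtPos ⟨n, p⟩ i).card ∧
        ¬ (HasUpAdj ⟨n, p⟩ ∧ HasDownAdj ⟨n, p⟩)).card : ℝ) / (Nat.factorial n : ℝ)


def upAt {n : ℕ} (p : Equiv.Perm (Fin n)) (i : Fin n) : Prop :=
  ∃ j : Fin n, (j : ℕ) = (i : ℕ) + 1 ∧ (p j : ℕ) = (p i : ℕ) + 1
def downAt {n : ℕ} (p : Equiv.Perm (Fin n)) (i : Fin n) : Prop :=
  ∃ j : Fin n, (j : ℕ) = (i : ℕ) + 1 ∧ (p i : ℕ) = (p j : ℕ) + 1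

noncomputable def upCount {n : ℕ} (p : Equiv.Perm (Fin n)) : ℕ :=
  (Finset.univ.filter fun i => upAt p i).card
noncomputable def downCount {n : ℕ} (p : Equiv.Perm (Fin n)) : ℕ :=
  (Finset.univ.filter fun i => downAt p i).card

/-- Duplicate position `i` of `σ` into an up-adjacency. -/
noncomputable def ins {n : ℕ} (σ : Equiv.Perm (Fin n)) (i : Fin n) : Equiv.Perm (Fin (n+1)) :=
  Equiv.ofBijective
    (Fin.insertNth (α := fun _ => Fin (n+1)) i.succ (σ i).succ (fun k => (σ i).succ.succAbove (σ k)))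
    (Finite.injective_iff_bijective.mp (by
      intro a b
      refine Fin.succAboveCases i.succ ?_ (fun k => ?_) a <;>
      refine Fin.succAboveCases i.succ ?_ (fun l => ?_) b
      · simp
      · intro h; simp at h
      · intro h; simp at h
      · intro h; simp at h; simp [h]))

lemma ins_same {n : ℕ} (σ : Equiv.Perm (Fin n)) (i : Fin n) : ins σ i i.succ = (σ i).succ := by
  simp [ins]
lemma ins_succAbove {n : ℕ} (σ : Equiv.Perm (Fin n)) (i k : Fin n) :
    ins σ i (i.succ.succAbove k) = (σ i).succ.succAbove (σ k) := by
  simp [ins]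

lemma val_succAbove {n : ℕ} (i k : Fin n) :
    ((i.succ.succAbove k : Fin (n+1)) : ℕ) = if (k:ℕ) ≤ i then (k:ℕ) else k + 1 := by
  unfold Fin.succAbove
  simp only [Fin.lt_def]
  split_ifs <;> simp_all
lemma val_succAbove' {n : ℕ} (i k : Fin n) :
    ((i.castSucc.succAbove k : Fin (n+1)) : ℕ) = if (k:ℕ) < i then (k:ℕ) else k + 1 := by
  unfold Fin.succAbove
  simp only [Fin.lt_def]
  split_ifs <;> simp_all

lemma ins_val_le {n : ℕ} (σ : Equiv.Perm (Fin n)) (i k : Fin n) (a : Fin (n+1))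
    (ha : (a : ℕ) = if (k:ℕ) ≤ i then (k:ℕ) else k + 1) :
    (ins σ i a : ℕ) = if (σ k:ℕ) ≤ σ i then (σ k:ℕ) else σ k + 1 := by
  have : a = i.succ.succAbove k := Fin.ext (by rw [ha, val_succAbove])
  rw [this, ins_succAbove, val_succAbove]

lemma ins_val_same {n : ℕ} (σ : Equiv.Perm (Fin n)) (i : Fin n) (a : Fin (n+1))
    (ha : (a : ℕ) = i + 1) : (ins σ i a : ℕ) = σ i + 1 := by
  have : a = i.succ := Fin.ext (by simp [ha])
  rw [this, ins_same]; simp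

lemma perm_val_inj {n : ℕ} (σ : Equiv.Perm (Fin n)) (i k : Fin n) :
    (σ i : ℕ) = σ k ↔ (i : ℕ) = k := by
  rw [← Fin.ext_iff, ← Fin.ext_iff, σ.injective.eq_iff]

lemma upAt_ins_self {n : ℕ} (σ : Equiv.Perm (Fin n)) (i : Fin n) : upAt (ins σ i) i.castSucc := by
  refine ⟨i.succ, by simp, ?_⟩
  rw [ins_val_same σ i i.succ (by simp), ins_val_le σ i i i.castSucc (by simp)]
  simp

lemma downAt_ins_self {n : ℕ} (σ : Equiv.Perm (Fin n)) (i : Fin n) :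
    ¬ downAt (ins σ i) i.castSucc := by
  rintro ⟨j, hj, h⟩
  rw [ins_val_same σ i j (by simpa using hj), ins_val_le σ i i i.castSucc (by simp)] at h
  simp at h
  omega

/-- values at `ψ k` and its successor -/
lemma ins_vals {n : ℕ} (σ : Equiv.Perm (Fin n)) (i k : Fin n) (a b : Fin (n+1)) (l : Fin n)
    (ha : (a : ℕ) = if (k:ℕ) < i then (k:ℕ) else k + 1) (hb : (b:ℕ) = a + 1) (hl : (l:ℕ) = k + 1) :
    (ins σ i a : ℕ) = (if (σ k:ℕ) < σ i then (σ k:ℕ) else σ k + 1) ∧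
    (ins σ i b : ℕ) = (if (σ l:ℕ) ≤ σ i then (σ l:ℕ) else σ l + 1) := by
  have h2 := perm_val_inj σ k i
  constructor
  · by_cases hk : (k:ℕ) = i
    · have : k = i := Fin.ext hk
      subst this
      rw [ins_val_same σ k a (by simpa using ha)]; simp
    · rw [ins_val_le σ i k a (by rw [ha]; split_ifs <;> omega)]
      split_ifs <;> omega
  · rw [ins_val_le σ i l b (by rw [hb, ha, hl]; split_ifs <;> omega)]

lemma succ_exists {n : ℕ} (i k : Fin n) (b : Fin (n+1))
    (hb : (b:ℕ) = (i.castSucc.succAbove k : Fin (n+1)) + 1) (hk : ¬ ((k:ℕ) + 1 < n)) : False := by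
  rw [val_succAbove'] at hb
  have := b.isLt
  have := i.isLt
  split_ifs at hb <;> omega

lemma succ_exists' {n : ℕ} (i k l : Fin n) (hl : (l:ℕ) = k + 1) :
    ∃ b : Fin (n+1), (b:ℕ) = (i.castSucc.succAbove k : Fin (n+1)) + 1 := by
  refine ⟨⟨_ + 1, ?_⟩, rfl⟩
  rw [val_succAbove']
  have := l.isLt
  split_ifs <;> omega

lemma upAt_ins {n : ℕ} (σ : Equiv.Perm (Fin n)) (i k : Fin n) :
    upAt (ins σ i) (i.castSucc.succAbove k) ↔ upAt σ k := by
  constructor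
  · rintro ⟨b, hb, h⟩
    by_cases hk : (k:ℕ) + 1 < n
    · refine ⟨⟨k+1, hk⟩, rfl, ?_⟩
      obtain ⟨e1, e2⟩ := ins_vals σ i k _ b ⟨k+1, hk⟩ (val_succAbove' i k) hb rfl
      rw [e1, e2] at h
      have := perm_val_inj σ k ⟨k+1, hk⟩
      have := perm_val_inj σ k i
      have := perm_val_inj σ ⟨k+1, hk⟩ i
      simp only at *
      split_ifs at h <;> omega
    · exact (succ_exists i k b hb hk).elim
  · rintro ⟨l, hl, h⟩
    obtain ⟨b, hb⟩ := succ_exists' i k l hl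
    refine ⟨b, hb, ?_⟩
    obtain ⟨e1, e2⟩ := ins_vals σ i k _ b l (val_succAbove' i k) hb hl
    rw [e1, e2]
    split_ifs <;> omega

lemma downAt_ins {n : ℕ} (σ : Equiv.Perm (Fin n)) (i k : Fin n) :
    downAt (ins σ i) (i.castSucc.succAbove k) ↔ (downAt σ k ∧ (k:ℕ) ≠ i ∧ (k:ℕ) + 1 ≠ i) := by
  constructor
  · rintro ⟨b, hb, h⟩
    by_cases hk : (k:ℕ) + 1 < n
    · obtain ⟨e1, e2⟩ := ins_vals σ i k _ b ⟨k+1, hk⟩ (val_succAbove' i k) hb rfl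
      rw [e1, e2] at h
      have := perm_val_inj σ k ⟨k+1, hk⟩
      have := perm_val_inj σ k i
      have := perm_val_inj σ ⟨k+1, hk⟩ i
      refine ⟨⟨⟨k+1, hk⟩, rfl, ?_⟩, ?_, ?_⟩ <;>
      simp only at * <;>
      split_ifs at h <;> omega
    · exact (succ_exists i k b hb hk).elim
  · rintro ⟨⟨l, hl, h⟩, h1, h2⟩
    obtain ⟨b, hb⟩ := succ_exists' i k l hl
    refine ⟨b, hb, ?_⟩
    obtain ⟨e1, e2⟩ := ins_vals σ i k _ b l (val_succAbove' i k) hb hl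
    have := perm_val_inj σ k i
    have := perm_val_inj σ l i
    rw [e1, e2]
    split_ifs <;> omega

lemma upCount_ins {n : ℕ} (σ : Equiv.Perm (Fin n)) (i : Fin n) :
    upCount (ins σ i) = upCount σ + 1 := by
  unfold upCount
  rw [Finset.card_filter, Finset.card_filter, Fin.sum_univ_succAbove _ i.castSucc]
  simp only [upAt_ins, upAt_ins_self, if_true]
  omega

lemma downCount_ins {n : ℕ} (σ : Equiv.Perm (Fin n)) (i : Fin n) :
    downCount (ins σ i) =
      (Finset.univ.filter fun k => downAt σ k ∧ (k:ℕ) ≠ i ∧ (k:ℕ) + 1 ≠ i).card := by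
  unfold downCount
  rw [Finset.card_filter, Finset.card_filter, Fin.sum_univ_succAbove _ i.castSucc]
  simp only [downAt_ins, downAt_ins_self, if_false, zero_add]

lemma exists_ins {n : ℕ} (π : Equiv.Perm (Fin (n+1))) (i : Fin n)
    (h : upAt π i.castSucc) : ∃ σ, ins σ i = π := by
  obtain ⟨j, hj, hv⟩ := h
  have hj' : j = i.succ := Fin.ext (by simpa using hj)
  subst hj'
  have key : ∀ k : Fin n, ∃ v, (π i.succ).succAbove v = π (i.succ.succAbove k) := fun k =>
    Fin.exists_succAbove_eq (fun e => Fin.succAbove_ne _ _ (π.injective e))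
  choose f hf using key
  have hinj : Function.Injective f := by
    intro a b hab
    have : π (i.succ.succAbove a) = π (i.succ.succAbove b) := by rw [← hf, ← hf, hab]
    exact Fin.succAbove_right_injective (π.injective this)
  let σ : Equiv.Perm (Fin n) := Equiv.ofBijective f (Finite.injective_iff_bijective.mp hinj)
  have hσ : ∀ k, σ k = f k := fun k => rfl
  have hi : (σ i).succ = π i.succ := by
    have h1 := hf i
    have h2 : i.succ.succAbove i = i.castSucc := by simp
    rw [h2] at h1
    rw [hσ]
    have h4 : (π i.succ).succAbove (f i) = (f i).castSucc ∨
       (π i.succ).succAbove (f i) = (f i).succ := by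
      unfold Fin.succAbove; split_ifs <;> simp
    have h5 : ¬ (π i.succ < (π i.succ).succAbove (f i)) := by
      rw [h1, Fin.lt_def]; omega
    apply Fin.ext
    rcases h4 with h4 | h4
    · rw [h4] at h1
      have := congrArg Fin.val h1
      simp at this ⊢; omega
    · exfalso
      unfold Fin.succAbove at h4 h5
      split_ifs at h4 h5 with h6
      · have := congrArg Fin.val h4; simp at this
      · apply h5
        rw [Fin.lt_def] at *; simp at *; omega
  refine ⟨σ, Equiv.ext fun a => ?_⟩
  refine Fin.succAboveCases i.succ ?_ (fun k => ?_) a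
  · rw [ins_same, hi]
  · rw [ins_succAbove, hi, hσ, hf]

lemma ins_injective {n : ℕ} (σ τ : Equiv.Perm (Fin n)) (i : Fin n) (h : ins σ i = ins τ i) :
    σ = τ := by
  have h0 : σ i = τ i := by
    have := congrArg (fun e => e i.succ) h
    simp only [ins_same] at this
    exact Fin.succ_injective _ this
  ext1 k
  have := congrArg (fun e => e (i.succ.succAbove k)) h
  simp only [ins_succAbove, h0] at this
  exact Fin.succAbove_right_injective this

lemma double_count (n : ℕ) (F : Equiv.Perm (Fin (n+1)) → ℕ) :
    ∑ π, upCount π * F π = ∑ σ : Equiv.Perm (Fin n), ∑ i : Fin n, F (ins σ i) := by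
  have h1 : ∀ π : Equiv.Perm (Fin (n+1)), upCount π * F π =
      ∑ i : Fin n, if upAt π i.castSucc then F π else 0 := by
    intro π
    unfold upCount
    rw [Finset.card_filter, Fin.sum_univ_castSucc]
    have : ¬ upAt π (Fin.last n) := by
      rintro ⟨j, hj, -⟩
      have := j.isLt
      simp at hj; omega
    rw [if_neg this, add_zero, Finset.sum_mul]
    simp
  simp only [h1]
  rw [Finset.sum_comm]
  conv_rhs => rw [Finset.sum_comm]
  refine Finset.sum_congr rfl fun i _ => ?_
  rw [← Finset.sum_filter]
  symm
  refine Finset.sum_bij (fun σ _ => ins σ i) ?_ ?_ ?_ ?_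
  · intro σ _; simp [upAt_ins_self]
  · intro σ _ τ _ h; exact ins_injective σ τ i h
  · intro π hπ
    obtain ⟨σ, h⟩ := exists_ins π i (by simpa using hπ)
    exact ⟨σ, Finset.mem_univ _, h⟩
  · intros; rfl

open Filter Topology in
lemma conv_limit (a z : ℕ → ℝ) (C L : ℝ) (hz : Summable fun k => |z k|)
    (ha : ∀ n, |a n| ≤ C) (hL : Tendsto a atTop (𝓝 L)) :
    Tendsto (fun n => ∑ k ∈ Finset.range (n+1), z k * a (n-k)) atTop (𝓝 (L * ∑' k, z k)) := by
  have hC : 0 ≤ C := (abs_nonneg _).trans (ha 0)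
  have h := tendsto_tsum_of_dominated_convergence (𝓕 := atTop)
    (f := fun n k => if k ∈ Finset.range (n+1) then z k * a (n-k) else 0)
    (g := fun k => z k * L) (bound := fun k => |z k| * C) (hz.mul_right C) ?_ ?_
  · rw [tsum_mul_right, mul_comm] at h
    refine h.congr fun n => ?_
    rw [tsum_eq_sum (s := Finset.range (n+1)) (fun b hb => by rw [if_neg hb])]
    exact Finset.sum_congr rfl fun k hk => by rw [if_pos hk]
  · intro k
    have h2 : Tendsto (fun n => z k * a (n-k)) atTop (𝓝 (z k * L)) :=
      (hL.comp (tendsto_sub_atTop_nat k)).const_mul _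
    refine h2.congr' ?_
    filter_upwards [eventually_ge_atTop k] with n hn
    rw [if_pos (by simp; omega)]
  · refine Eventually.of_forall fun n k => ?_
    split_ifs
    · rw [Real.norm_eq_abs, abs_mul]
      exact mul_le_mul_of_nonneg_left (ha _) (abs_nonneg _)
    · simp; positivity

open Filter Topology in
lemma limit_zero (x : ℕ → ℕ → ℝ) (L : ℝ) (h0 : ∀ n u, 0 ≤ x n u)
    (h1 : ∀ n u, x n u ≤ 1 / (u.factorial : ℝ))
    (hsum : Tendsto (fun n => ∑ u ∈ Finset.range (n+1), x n u) atTop (𝓝 L))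
    (hrec : ∀ u : ℕ, Tendsto (fun n => ((u:ℝ)+1) * x (n+1) (u+1) - x n u) atTop (𝓝 0)) :
    Tendsto (fun n => x n 0) atTop (𝓝 (L * Real.exp (-1))) := by
  have hfs : Summable fun k : ℕ => 1 / (k.factorial : ℝ) := by
    simpa using Real.summable_pow_div_factorial 1
  -- step 1
  have hapx : ∀ u, Tendsto (fun n => x (n+u) u - x n 0 / (u.factorial : ℝ)) atTop (𝓝 0) := by
    intro u
    induction u with
    | zero => simp
    | succ u ih =>
      have h2 := (((hrec u).comp (tendsto_add_atTop_nat u)).add ih).div_const ((u:ℝ)+1)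
      simp only [add_zero, zero_div] at h2
      refine h2.congr fun n => ?_
      have : (u:ℝ)+1 ≠ 0 := by positivity
      have h3 : (u.factorial:ℝ) ≠ 0 := by positivity
      simp only [Function.comp, Nat.factorial_succ, Nat.cast_mul, Nat.cast_add, Nat.cast_one]
      rw [show n + (u+1) = n + u + 1 by ring]
      field_simp
      ring
  set T : ℕ → ℝ := fun n => ∑ u ∈ Finset.range (n+1), (1 / (u.factorial:ℝ)) * x (n-u) 0 with hT
  have hx01 : ∀ n, x n 0 ≤ 1 := fun n => by simpa using h1 n 0
  have hdiff : Tendsto (fun n => ∑ u ∈ Finset.range (n+1),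
      (x n u - (1 / (u.factorial:ℝ)) * x (n-u) 0)) atTop (𝓝 0) := by
    have h := tendsto_tsum_of_dominated_convergence (𝓕 := atTop)
      (f := fun n u => if u ∈ Finset.range (n+1) then
        (x n u - (1 / (u.factorial:ℝ)) * x (n-u) 0) else 0)
      (g := fun _ => (0:ℝ)) (bound := fun k => 1 / (k.factorial : ℝ)) hfs ?_ ?_
    · rw [tsum_zero] at h
      refine h.congr fun n => ?_
      rw [tsum_eq_sum (s := Finset.range (n+1)) (fun b hb => by rw [if_neg hb])]
      exact Finset.sum_congr rfl fun k hk => by rw [if_pos hk]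
    · intro u
      refine ((hapx u).comp (tendsto_sub_atTop_nat u)).congr' ?_
      filter_upwards [eventually_ge_atTop u] with n hn
      rw [if_pos (by simp; omega)]
      simp only [Function.comp]
      rw [Nat.sub_add_cancel hn]; ring
    · refine Eventually.of_forall fun n k => ?_
      have hp : 0 ≤ 1 / (k.factorial : ℝ) := by positivity
      split_ifs
      · rw [Real.norm_eq_abs, abs_le]
        have a1 := h0 n k
        have a2 := h1 n k
        have a3 : 0 ≤ 1 / (k.factorial : ℝ) * x (n-k) 0 := mul_nonneg hp (h0 _ _)
        have a4 : 1 / (k.factorial : ℝ) * x (n-k) 0 ≤ 1 / (k.factorial : ℝ) :=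
          mul_le_of_le_one_right hp (hx01 _)
        constructor <;> linarith
      · simp
  have hTL : Tendsto T atTop (𝓝 L) := by
    have := hsum.sub hdiff
    rw [sub_zero] at this
    refine this.congr fun n => ?_
    rw [← Finset.sum_sub_distrib]
    exact Finset.sum_congr rfl fun _ _ => by ring
  -- inversion
  have hinv : ∀ n, x n 0 = ∑ k ∈ Finset.range (n+1), ((-1)^k / (k.factorial:ℝ)) * T (n-k) := by
    intro n
    let Y : PowerSeries ℝ := PowerSeries.mk fun n => x n 0
    have hY : PowerSeries.mk T = PowerSeries.exp ℝ * Y := by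
      ext m
      rw [PowerSeries.coeff_mul, PowerSeries.coeff_mk,
        Finset.Nat.sum_antidiagonal_eq_sum_range_succ_mk]
      simp [Y, hT, PowerSeries.coeff_exp]
    have h2 : PowerSeries.evalNegHom (PowerSeries.exp ℝ) * PowerSeries.mk T = Y := by
      rw [hY, ← mul_assoc, mul_comm (PowerSeries.evalNegHom _),
        PowerSeries.exp_mul_exp_neg_eq_one, one_mul]
    have h3 := congrArg (PowerSeries.coeff n) h2
    rw [PowerSeries.coeff_mul, Finset.Nat.sum_antidiagonal_eq_sum_range_succ_mk] at h3
    simp only [Y, PowerSeries.coeff_mk] at h3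
    rw [← h3]
    refine Finset.sum_congr rfl fun k _ => ?_
    congr 1
    simp [PowerSeries.evalNegHom, PowerSeries.coeff_rescale, PowerSeries.coeff_exp, div_eq_mul_inv]
  have hTb : ∀ n, |T n| ≤ ∑' k : ℕ, 1 / (k.factorial : ℝ) := by
    intro n
    rw [abs_of_nonneg (Finset.sum_nonneg fun u _ => mul_nonneg (by positivity) (h0 _ _))]
    refine le_trans (Finset.sum_le_sum fun u _ => ?_)
      (hfs.sum_le_tsum (Finset.range (n+1)) fun u _ => by positivity)
    exact mul_le_of_le_one_right (by positivity) (hx01 _)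
  have hfin := conv_limit T (fun k => (-1)^k / (k.factorial:ℝ)) _ L
    (by simpa [abs_div] using hfs) hTb hTL
  have he : ∑' k : ℕ, (-1:ℝ)^k / (k.factorial:ℝ) = Real.exp (-1) := by
    rw [Real.exp_eq_exp_ℝ, NormedSpace.exp_eq_tsum_div]
  rw [he] at hfin
  exact hfin.congr fun n => (hinv n).symm

noncomputable def cntU (n u : ℕ) : ℕ :=
  (Finset.univ.filter fun p : Equiv.Perm (Fin n) => upCount p = u).card
noncomputable def cntUD (n u : ℕ) : ℕ :=
  (Finset.univ.filter fun p : Equiv.Perm (Fin n) => upCount p = u ∧ downCount p = 0).card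

lemma upCount_le {n : ℕ} (p : Equiv.Perm (Fin n)) : upCount p ≤ n := by
  unfold upCount
  exact (Finset.card_filter_le _ _).trans (by simp)

lemma cntU_succ (n u : ℕ) : (u+1) * cntU (n+1) (u+1) = n * cntU n u := by
  have h := double_count n (fun π => if upCount π = u + 1 then 1 else 0)
  unfold cntU
  rw [Finset.card_filter, Finset.card_filter, Finset.mul_sum, Finset.mul_sum]
  simp only [upCount_ins] at h
  convert h using 1
  · refine Finset.sum_congr rfl fun π _ => ?_
    split_ifs with h
    · rw [h]
    · simp
  · refine Finset.sum_congr rfl fun π _ => ?_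
    simp

lemma sum_upCount (n : ℕ) : ∑ π : Equiv.Perm (Fin (n+1)), upCount π = n * n.factorial := by
  have h := double_count n (fun _ => 1)
  simp only [mul_one] at h
  rw [h]
  simp [Fintype.card_perm, mul_comm]

lemma sum_upCount_le (n : ℕ) : ∑ π : Equiv.Perm (Fin n), upCount π ≤ n.factorial := by
  cases n with
  | zero =>
    refine (Finset.sum_le_sum fun p _ => upCount_le p).trans ?_
    simp
  | succ n =>
    rw [sum_upCount, Nat.factorial_succ]
    exact Nat.mul_le_mul_right _ (by omega)

lemma upAt_rev {n : ℕ} (p : Equiv.Perm (Fin n)) (i : Fin n) :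
    upAt (Fin.revPerm * p) i ↔ downAt p i := by
  unfold upAt downAt
  refine exists_congr fun j => and_congr_right fun _ => ?_
  have := (p j).isLt
  have := (p i).isLt
  simp only [Equiv.Perm.mul_apply, Fin.revPerm_apply, Fin.val_rev]
  omega

lemma downAt_rev {n : ℕ} (p : Equiv.Perm (Fin n)) (i : Fin n) :
    downAt (Fin.revPerm * p) i ↔ upAt p i := by
  unfold upAt downAt
  refine exists_congr fun j => and_congr_right fun _ => ?_
  have := (p j).isLt
  have := (p i).isLt
  simp only [Equiv.Perm.mul_apply, Fin.revPerm_apply, Fin.val_rev]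
  omega

lemma upCount_rev {n : ℕ} (p : Equiv.Perm (Fin n)) : upCount (Fin.revPerm * p) = downCount p := by
  simp only [upCount, downCount, upAt_rev]
lemma downCount_rev {n : ℕ} (p : Equiv.Perm (Fin n)) : downCount (Fin.revPerm * p) = upCount p := by
  simp only [upCount, downCount, downAt_rev]

lemma rev_sum {n : ℕ} (G : ℕ → ℕ → ℕ) :
    ∑ p : Equiv.Perm (Fin n), G (upCount p) (downCount p) =
    ∑ p : Equiv.Perm (Fin n), G (downCount p) (upCount p) := by
  rw [← Equiv.sum_comp (Equiv.mulLeft (Fin.revPerm : Equiv.Perm (Fin n)))]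
  simp only [Equiv.coe_mulLeft, upCount_rev, downCount_rev]

lemma sum_downCount_le (n : ℕ) : ∑ π : Equiv.Perm (Fin n), downCount π ≤ n.factorial := by
  rw [← rev_sum (fun a _ => a)]
  exact sum_upCount_le n

lemma downCount_ins_zero {n : ℕ} (σ : Equiv.Perm (Fin n)) (i : Fin n) (h : downCount σ = 0) :
    downCount (ins σ i) = 0 := by
  rw [downCount_ins]
  unfold downCount at h
  rw [Finset.card_eq_zero] at h ⊢
  rw [Finset.filter_eq_empty_iff] at h ⊢
  intro k hk hh
  exact h hk hh.1

lemma bad_count {n : ℕ} (σ : Equiv.Perm (Fin n)) (h : downCount σ ≠ 0) :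
    (Finset.univ.filter fun i : Fin n => downCount (ins σ i) = 0).card ≤ 2 * downCount σ := by
  have hsub : (Finset.univ.filter fun i : Fin n => downCount (ins σ i) = 0) ⊆
      (Finset.univ.filter fun k : Fin n => downAt σ k) ∪
      (Finset.univ.filter fun k : Fin n => downAt σ k).biUnion
        (fun k => Finset.univ.filter fun i : Fin n => (k:ℕ) + 1 = i) := by
    intro i hi
    simp only [Finset.mem_filter, Finset.mem_univ, true_and] at hi
    rw [downCount_ins, Finset.card_eq_zero, Finset.filter_eq_empty_iff] at hi
    unfold downCount at h
    obtain ⟨k, hk⟩ := Finset.card_ne_zero.mp h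
    simp only [Finset.mem_filter, Finset.mem_univ, true_and] at hk
    have h2 := hi (Finset.mem_univ k)
    simp only [Finset.mem_union, Finset.mem_filter, Finset.mem_univ, true_and, Finset.mem_biUnion]
    by_cases hki : (k:ℕ) = i
    · left; rwa [← Fin.ext hki]
    · right; exact ⟨k, hk, by tauto⟩
  refine (Finset.card_le_card hsub).trans ((Finset.card_union_le _ _).trans ?_)
  have : ((Finset.univ.filter fun k : Fin n => downAt σ k).biUnion
        (fun k => Finset.univ.filter fun i : Fin n => (k:ℕ) + 1 = i)).card ≤ downCount σ * 1 := by
    refine Finset.card_biUnion_le_card_mul _ _ _ fun k _ => ?_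
    rw [Finset.card_le_one]
    intro a ha b hb
    simp at ha hb
    exact Fin.ext (by omega)
  unfold downCount at *
  omega

lemma cntUD_succ_eq (n u : ℕ) : (u+1) * cntUD (n+1) (u+1) =
    ∑ σ : Equiv.Perm (Fin n), if upCount σ = u then
      (Finset.univ.filter fun i : Fin n => downCount (ins σ i) = 0).card else 0 := by
  have h := double_count n (fun π => if upCount π = u + 1 ∧ downCount π = 0 then 1 else 0)
  unfold cntUD
  rw [Finset.card_filter, Finset.mul_sum]
  convert h using 1
  · refine Finset.sum_congr rfl fun π _ => ?_
    split_ifs with h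
    · rw [h.1]
    · simp
  · refine Finset.sum_congr rfl fun π _ => ?_
    rw [Finset.card_filter]
    simp only [upCount_ins]
    split_ifs with h
    · simp [h]
    · simp [h]

lemma cntUD_eq (n u : ℕ) : n * cntUD n u =
    ∑ σ : Equiv.Perm (Fin n), if upCount σ = u ∧ downCount σ = 0 then n else 0 := by
  unfold cntUD
  rw [Finset.card_filter, Finset.mul_sum]
  simp

lemma cntUD_lower (n u : ℕ) : n * cntUD n u ≤ (u+1) * cntUD (n+1) (u+1) := by
  rw [cntUD_eq, cntUD_succ_eq]
  refine Finset.sum_le_sum fun σ _ => ?_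
  split_ifs with h h' h'
  · simp [downCount_ins_zero σ _ h.2]
  · exact absurd h.1 h'
  · simp
  · simp

lemma cntUD_upper (n u : ℕ) :
    (u+1) * cntUD (n+1) (u+1) ≤ n * cntUD n u + 2 * n.factorial := by
  refine le_trans ?_ (Nat.add_le_add_left (Nat.mul_le_mul_left 2 (sum_downCount_le n)) _)
  rw [cntUD_eq, cntUD_succ_eq, Finset.mul_sum, ← Finset.sum_add_distrib]
  refine Finset.sum_le_sum fun σ _ => ?_
  by_cases h : upCount σ = u
  · by_cases h' : downCount σ = 0
    · simp only [h, h', if_true, and_self]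
      exact ((Finset.card_filter_le _ _).trans (by simp)).trans (Nat.le_add_right _ _)
    · simp only [h, h', if_true, and_false, if_false, zero_add]
      exact bad_count σ h'
  · simp [h]

lemma sum_cntU (n : ℕ) : ∑ u ∈ Finset.range (n+1), cntU n u = n.factorial := by
  unfold cntU
  rw [← Finset.card_eq_sum_card_fiberwise (f := fun p : Equiv.Perm (Fin n) => upCount p)
    (s := Finset.univ) (t := Finset.range (n+1))]
  · simp [Fintype.card_perm]
  · intro p _
    have := upCount_le p
    simp; omega

lemma cnt_down_zero (n : ℕ) :
    (Finset.univ.filter fun p : Equiv.Perm (Fin n) => downCount p = 0).card = cntU n 0 := by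
  unfold cntU
  rw [Finset.card_filter, Finset.card_filter]
  exact rev_sum (fun _ d => if d = 0 then 1 else 0)

lemma sum_cntUD (n : ℕ) : ∑ u ∈ Finset.range (n+1), cntUD n u = cntU n 0 := by
  rw [← cnt_down_zero, Finset.card_eq_sum_card_fiberwise
    (f := fun p : Equiv.Perm (Fin n) => upCount p) (t := Finset.range (n+1))]
  · refine Finset.sum_congr rfl fun u _ => ?_
    unfold cntUD
    rw [Finset.filter_filter]
    congr 1
    ext p
    simp [and_comm]
  · intro p _
    have := upCount_le p
    simp; omega

open Filter Topology

lemma cntU_bound (n u : ℕ) : (cntU n u : ℝ) / n.factorial ≤ 1 / (u.factorial : ℝ) := by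
  induction u generalizing n with
  | zero =>
    rw [Nat.factorial_zero, Nat.cast_one, div_one]
    apply div_le_one_of_le₀ _ (by positivity)
    unfold cntU
    exact_mod_cast (Finset.card_filter_le _ _).trans (by simp [Fintype.card_perm])
  | succ u ih =>
    cases n with
    | zero =>
      have : cntU 0 (u+1) = 0 := by
        unfold cntU
        rw [Finset.card_eq_zero, Finset.filter_eq_empty_iff]
        intro p _
        have := upCount_le p
        omega
      rw [this]; simp
    | succ n =>
      have h := cntU_succ n u
      have h' : ((u:ℝ)+1) * cntU (n+1) (u+1) = n * cntU n u := by exact_mod_cast h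
      have h2 := ih n
      have hn : (0:ℝ) < n.factorial := by positivity
      have hu : (0:ℝ) < u.factorial := by positivity
      rw [div_le_div_iff₀ hn hu] at h2
      rw [div_le_div_iff₀ (by positivity) (by positivity)]
      rw [Nat.factorial_succ, Nat.factorial_succ]
      push_cast
      have : (0:ℝ) ≤ n := by positivity
      calc (cntU (n+1) (u+1) : ℝ) * (((u:ℝ)+1) * u.factorial)
          = (((u:ℝ)+1) * cntU (n+1) (u+1)) * u.factorial := by ring
        _ = n * (cntU n u * u.factorial) := by rw [h']; ring
        _ ≤ n * (1 * n.factorial) := by gcongr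
        _ ≤ 1 * (((n:ℝ)+1) * n.factorial) := by nlinarith

lemma cntUD_bound (n u : ℕ) : (cntUD n u : ℝ) / n.factorial ≤ 1 / (u.factorial : ℝ) := by
  refine le_trans ?_ (cntU_bound n u)
  have : cntUD n u ≤ cntU n u := by
    unfold cntUD cntU
    exact Finset.card_le_card (Finset.monotone_filter_right _ (fun p _ h => h.1))
  gcongr

/-- A common form of the recurrence. -/
lemma rec_tendsto (c : ℕ → ℕ → ℕ) (u : ℕ) (hb : ∀ n, (c n u : ℝ) / n.factorial ≤ 1)
    (hlow : ∀ n, n * c n u ≤ (u+1) * c (n+1) (u+1))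
    (hup : ∀ n, (u+1) * c (n+1) (u+1) ≤ n * c n u + 2 * n.factorial) :
    Tendsto (fun n => ((u:ℝ)+1) * ((c (n+1) (u+1) : ℝ) / (n+1).factorial)
      - (c n u : ℝ) / n.factorial) atTop (𝓝 0) := by
  have h1 : Tendsto (fun n : ℕ => 2 * (1 / ((n:ℝ)+1))) atTop (𝓝 0) := by
    simpa using (tendsto_one_div_add_atTop_nhds_zero_nat (𝕜 := ℝ)).const_mul 2
  refine squeeze_zero_norm (fun n => ?_) h1
  have hlow' : (n:ℝ) * c n u ≤ ((u:ℝ)+1) * c (n+1) (u+1) := by exact_mod_cast hlow n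
  have hup' : ((u:ℝ)+1) * c (n+1) (u+1) ≤ (n:ℝ) * c n u + 2 * n.factorial := by
    exact_mod_cast hup n
  have hn : (0:ℝ) < n.factorial := by positivity
  have hb' := hb n
  rw [div_le_one hn] at hb'
  have e : ((u:ℝ)+1) * ((c (n+1) (u+1) : ℝ) / (n+1).factorial) - (c n u : ℝ) / n.factorial
      = (((u:ℝ)+1) * c (n+1) (u+1) - (n+1) * c n u) / ((n+1) * n.factorial) := by
    rw [Nat.factorial_succ]; push_cast
    field_simp
  have e2 : 2 * (1 / ((n:ℝ)+1)) = (2 * n.factorial) / ((n+1) * n.factorial) := by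
    field_simp
  have hc : (0:ℝ) ≤ c n u := by positivity
  rw [e, e2, Real.norm_eq_abs, abs_div, abs_of_pos (a := ((n:ℝ)+1) * n.factorial) (by positivity)]
  gcongr
  rw [abs_le]
  constructor <;> linarith

lemma fact_inv_le_one (u : ℕ) : 1 / (u.factorial : ℝ) ≤ 1 := by
  rw [div_le_one (by positivity)]
  exact_mod_cast Nat.factorial_pos u

lemma limU : Tendsto (fun n => (cntU n 0 : ℝ) / n.factorial) atTop (𝓝 (Real.exp (-1))) := by
  have h := limit_zero (fun n u => (cntU n u : ℝ) / n.factorial) 1 (fun _ _ => by positivity)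
    cntU_bound ?_ ?_
  · simpa using h
  · refine tendsto_const_nhds.congr fun n => ?_
    rw [← Finset.sum_div, ← Nat.cast_sum, sum_cntU, div_self (by positivity)]
  · intro u
    exact rec_tendsto cntU u (fun n => (cntU_bound n u).trans (fact_inv_le_one u))
      (fun n => (cntU_succ n u).ge) (fun n => (cntU_succ n u).le.trans (Nat.le_add_right _ _))

lemma recUD (u : ℕ) : Tendsto (fun n => ((u:ℝ)+1) * ((cntUD (n+1) (u+1) : ℝ) / (n+1).factorial)
      - (cntUD n u : ℝ) / n.factorial) atTop (𝓝 0) :=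
  rec_tendsto cntUD u (fun n => (cntUD_bound n u).trans (fact_inv_le_one u))
      (fun n => cntUD_lower n u) (fun n => cntUD_upper n u)

lemma limUD0 : Tendsto (fun n => (cntUD n 0 : ℝ) / n.factorial) atTop
    (𝓝 (Real.exp (-1) * Real.exp (-1))) := by
  refine limit_zero (fun n u => (cntUD n u : ℝ) / n.factorial) _ (fun _ _ => by positivity)
    cntUD_bound ?_ recUD
  refine limU.congr fun n => ?_
  rw [← Finset.sum_div, ← Nat.cast_sum, sum_cntUD]

lemma limUD1 : Tendsto (fun n => (cntUD n 1 : ℝ) / n.factorial) atTop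
    (𝓝 (Real.exp (-1) * Real.exp (-1))) := by
  rw [← tendsto_add_atTop_iff_nat 1]
  have h := (recUD 0).add limUD0
  have e : (0:ℝ) + Real.exp (-1) * Real.exp (-1) = Real.exp (-1) * Real.exp (-1) := zero_add _
  rw [e] at h
  refine h.congr fun n => ?_
  simp

lemma card_lower (n : ℕ) : 2 * cntU n 0 ≤ (Finset.univ.filter fun p : Equiv.Perm (Fin n) =>
      2 ≤ (Finset.univ.filter fun i : Fin n => AdjAtPos ⟨n, p⟩ i).card ∧
        ¬ (HasUpAdj ⟨n, p⟩ ∧ HasDownAdj ⟨n, p⟩)).card + 2 * cntUD n 0 + 2 * cntUD n 1 := by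
  have hA : (Finset.univ.filter fun p : Equiv.Perm (Fin n) =>
      2 ≤ upCount p ∧ downCount p = 0).card + cntUD n 0 + cntUD n 1 = cntU n 0 := by
    rw [← cnt_down_zero]
    unfold cntUD
    simp only [Finset.card_filter, ← Finset.sum_add_distrib]
    refine Finset.sum_congr rfl fun p _ => ?_
    split_ifs <;> omega
  have hB : (Finset.univ.filter fun p : Equiv.Perm (Fin n) =>
      2 ≤ downCount p ∧ upCount p = 0).card = (Finset.univ.filter fun p : Equiv.Perm (Fin n) =>
      2 ≤ upCount p ∧ downCount p = 0).card := by
    rw [Finset.card_filter, Finset.card_filter]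
    exact rev_sum (fun u d => if 2 ≤ d ∧ u = 0 then 1 else 0)
  have hdisj : Disjoint (Finset.univ.filter fun p : Equiv.Perm (Fin n) =>
      2 ≤ upCount p ∧ downCount p = 0) (Finset.univ.filter fun p : Equiv.Perm (Fin n) =>
      2 ≤ downCount p ∧ upCount p = 0) := by
    rw [Finset.disjoint_filter]
    intro p _ h1 h2
    omega
  have hadj : ∀ (p : Equiv.Perm (Fin n)) i, AdjAtPos ⟨n, p⟩ i ↔ upAt p i ∨ downAt p i := by
    intro p i
    unfold AdjAtPos upAt downAt
    simp only [and_or_left, exists_or]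
  have hsub : (Finset.univ.filter fun p : Equiv.Perm (Fin n) =>
      2 ≤ upCount p ∧ downCount p = 0) ∪ (Finset.univ.filter fun p : Equiv.Perm (Fin n) =>
      2 ≤ downCount p ∧ upCount p = 0) ⊆ (Finset.univ.filter fun p : Equiv.Perm (Fin n) =>
      2 ≤ (Finset.univ.filter fun i : Fin n => AdjAtPos ⟨n, p⟩ i).card ∧
        ¬ (HasUpAdj ⟨n, p⟩ ∧ HasDownAdj ⟨n, p⟩)) := by
    intro p hp
    simp only [Finset.mem_union, Finset.mem_filter, Finset.mem_univ, true_and] at hp ⊢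
    have huc : upCount p ≤ (Finset.univ.filter fun i : Fin n => AdjAtPos ⟨n, p⟩ i).card :=
      Finset.card_le_card (Finset.monotone_filter_right _ fun i _ h => (hadj p i).2 (Or.inl h))
    have hdc : downCount p ≤ (Finset.univ.filter fun i : Fin n => AdjAtPos ⟨n, p⟩ i).card :=
      Finset.card_le_card (Finset.monotone_filter_right _ fun i _ h => (hadj p i).2 (Or.inr h))
    rcases hp with ⟨h1, h2⟩ | ⟨h1, h2⟩
    · refine ⟨h1.trans huc, ?_⟩
      rintro ⟨-, i, j, h⟩
      unfold downCount at h2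
      rw [Finset.card_eq_zero, Finset.filter_eq_empty_iff] at h2
      exact h2 (Finset.mem_univ i) ⟨j, h⟩
    · refine ⟨h1.trans hdc, ?_⟩
      rintro ⟨⟨i, j, h⟩, -⟩
      unfold upCount at h2
      rw [Finset.card_eq_zero, Finset.filter_eq_empty_iff] at h2
      exact h2 (Finset.mem_univ i) ⟨j, h⟩
  have := Finset.card_le_card hsub
  rw [Finset.card_union_of_disjoint hdisj, hB] at this
  omega

lemma density_lower (n : ℕ) : 2 * ((cntU n 0 : ℝ) / n.factorial - (cntUD n 0 : ℝ) / n.factorial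
    - (cntUD n 1 : ℝ) / n.factorial) ≤ nonOpposingDensity n := by
  unfold nonOpposingDensity
  rw [← sub_div, ← sub_div, ← mul_div_assoc]
  have h := card_lower n
  have h' := (Nat.cast_le (α := ℝ)).2 h
  simp only [Nat.cast_add, Nat.cast_mul, Nat.cast_ofNat] at h'
  gcongr
  linarith

/-- The proportion of permutations of length `n` with at least two
adjacencies, all of the same type, is asymptotically bounded below by
`0.1944`. -/
theorem nonOpposing_density_lower_bound :
    (0.1944 : ℝ) ≤ Filter.liminf nonOpposingDensity Filter.atTop := by
  have hlim := ((limU.sub limUD0).sub limUD1).const_mul 2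
  have hx1 := Real.exp_neg_one_gt_d9
  have hx2 := Real.exp_neg_one_lt_d9
  have hnum : (0.1944 : ℝ) < 2 * (Real.exp (-1) - Real.exp (-1) * Real.exp (-1)
      - Real.exp (-1) * Real.exp (-1)) := by
    nlinarith
  have hev := hlim.eventually_const_lt hnum
  refine Filter.le_liminf_of_le ?_ (hev.mono fun n hn => hn.le.trans (density_lower n))
  refine Filter.IsBoundedUnder.isCoboundedUnder_ge ⟨1, ?_⟩
  rw [Filter.eventually_map]
  refine Filter.Eventually.of_forall fun n => ?_
  unfold nonOpposingDensity
  apply div_le_one_of_le₀ _ (by positivity)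
  exact_mod_cast (Finset.card_filter_le _ _).trans (by simp [Fintype.card_perm])
end
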